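/- arXiv:1210.1342 — 2 statements merged into one kernel-verified Lean document; each statement's English description precedes it below -/
import Mathlib

section
/- Let α, β ≥ -1/2 with α + β > -1, let M, N ≥ 0 be integers with M + N > 0, let K ≥ 0 be an integer, let ε₁ ∈ {0,1,2}, τ ∈ {0,1} and γ ∈ {τ, 2τ}, and assume ε₁ + K + 2τ - γ ≤ M + N. There exists a constant C depending only on these parameters such that for all θ, φ ∈ (0,π) with θ ≠ φ one has ( ∫₀^∞ |∂_θ^{ε₁} ∂_t^{K} H_t^{α+τ, β+τ}(θ,φ)|² t^{2M+2N-1} dt )^{1/2} ≤ C (θ+φ)^{-γ} (2π-θ-φ)^{-γ} / μ_{α,β}^+(B(θ, |θ-φ|)). -/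
open MeasureTheory Real Set

noncomputable section

/-- The Jacobi measure `μ_{α,β}^+` on `(0,π)`: density
`(sin(θ/2))^(2α+1) (cos(θ/2))^(2β+1)` w.r.t. Lebesgue measure on `(0,π)`. -/
def jacobiMeasure (α β : ℝ) : Measure ℝ :=
  (volume.restrict (Ioo 0 π)).withDensity
    (fun θ => ENNReal.ofReal (Real.sin (θ / 2) ^ (2 * α + 1) * Real.cos (θ / 2) ^ (2 * β + 1)))

/-- The ball `B(θ,r) = (θ-r, θ+r) ∩ (0,π)`. -/
def jacobiBall (θ r : ℝ) : Set ℝ := Ioo (θ - r) (θ + r) ∩ Ioo 0 π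

/-- The measure `Π_α` on `[-1,1]`. -/
def PiMeasure (α : ℝ) : Measure ℝ :=
  if α = -(1 / 2) then (2 : ENNReal)⁻¹ • (Measure.dirac (-1) + Measure.dirac 1)
  else
    (volume.restrict (Icc (-1) 1)).withDensity
      (fun u => ENNReal.ofReal
        (Real.Gamma (α + 1) / (Real.sqrt π * Real.Gamma (α + 1 / 2)) * (1 - u ^ 2) ^ (α - 1 / 2)))

/-- `q(θ,φ,u,v) = 1 - u sin(θ/2) sin(φ/2) - v cos(θ/2) cos(φ/2)`. -/
def qfun (θ φ u v : ℝ) : ℝ :=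
  1 - u * Real.sin (θ / 2) * Real.sin (φ / 2) - v * Real.cos (θ / 2) * Real.cos (φ / 2)

/-- `Ψ^{α,β}(t,s) = sinh(t/2) / (cosh(t/2) - 1 + s)^(α+β+2)`. -/
def Psi (α β t s : ℝ) : ℝ :=
  Real.sinh (t / 2) / (Real.cosh (t / 2) - 1 + s) ^ (α + β + 2)

/-- The Jacobi-Poisson kernel `H_t^{α,β}(θ,φ)`. -/
def Hker (α β t θ φ : ℝ) : ℝ :=
  ((2 : ℝ) ^ (-(α + β + 2)) / (jacobiMeasure α β (Ioo 0 π)).toReal) * Real.sinh (t / 2) *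
    ∫ u, ∫ v, 1 / (Real.cosh (t / 2) - 1 + qfun θ φ u v) ^ (α + β + 2)
      ∂(PiMeasure β) ∂(PiMeasure α)

/-- The symmetrized kernel `H̃_t^{α,β}(θ,φ) = (1/4) sin θ sin φ H_t^{α+1,β+1}(θ,φ)`. -/
def Htilde (α β t θ φ : ℝ) : ℝ :=
  (1 / 4) * Real.sin θ * Real.sin φ * Hker (α + 1) (β + 1) t θ φ

end

/-!
Derivatives of the integrand of `Hker` expand into monomials in `sinh (t / 2)`, `cosh (t / 2)`,
`cosh (t / 2) - 1 + q`, `1 - q` and a quantity `Y` proportional to `∂q/∂θ`. Since `sinh (t / 2)` and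
`Y` have size at most the square root of `cosh (t / 2) - 1 + q` and each derivative costs one such
square root, counting degrees bounds them by a power of `cosh (t / 2) - 1 + q` times a power of
`cosh (t / 2)`.

Write `a = α + τ`, `c = β + τ`. Averaging that bound over `Π_a × Π_c` gives
`D ^ (-(n + 1) / 2) * E ^ (-(a + 1 / 2)) * F ^ (-(c + 1 / 2)) * cosh (t / 2) ^ (-(a + c + 1))`,
where `n = K + ε₁` and `D`, `E`, `F` are `1 - x / cosh (t / 2)` with `x` equal to
`cos ((θ - φ) / 2)`, `cos (θ / 2) * cos (φ / 2)` and `sin (θ / 2) * sin (φ / 2)`. Up to constants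
`E ≥ (θ + φ) ^ 2`, `F ≥ (2 * π - θ - φ) ^ 2`, and `D ≤ E * F` because one of `E`, `F` is bounded
below; this trades powers of `E * F` for powers of `D`. Finally
`D ≥ (t ^ 2 + (θ - φ) ^ 2) / (1 + t ^ 2)` up to a constant, and the decay of `cosh (t / 2)` absorbs
`1 + t ^ 2`, so the integral in `t` becomes explicit.
-/

namespace JacobiPoisson

section Symbols

/-- The inner product of `w` with the unit vector `(sin (θ / 2), cos (θ / 2))`. For
`w = (u sin (φ / 2), v cos (φ / 2))` it is `1 - qfun θ φ u v`. -/
noncomputable def rotCos (θ : ℝ) (w : ℝ × ℝ) : ℝ :=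
  w.1 * sin (θ / 2) + w.2 * cos (θ / 2)

/-- The component of `w` orthogonal to `(sin (θ / 2), cos (θ / 2))`, which is twice the
`θ`-derivative of `rotCos θ w`. -/
noncomputable def rotSin (θ : ℝ) (w : ℝ × ℝ) : ℝ :=
  w.1 * cos (θ / 2) - w.2 * sin (θ / 2)

/-- The denominator `cosh (t / 2) - 1 + q` of the Jacobi-Poisson kernel at the point
`((t, θ), w)`, where `w = (u sin (φ / 2), v cos (φ / 2))`. -/
noncomputable def denom (p : (ℝ × ℝ) × ℝ × ℝ) : ℝ :=
  cosh (p.1.1 / 2) - rotCos p.1.2 p.2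

/-- The monomials in which the derivatives of the integrand of the Jacobi-Poisson kernel expand. -/
noncomputable def symbolMonomial (b : ℝ) (i j l m k : ℕ) (p : (ℝ × ℝ) × ℝ × ℝ) : ℝ :=
  sinh (p.1.1 / 2) ^ i * cosh (p.1.1 / 2) ^ j * rotSin p.1.2 p.2 ^ l * rotCos p.1.2 p.2 ^ m *
    denom p ^ (-(b + k))

/-- The points `((t, θ), w)` with `t > 0` and `w` in the closed unit disc. -/
def symbolDomain : Set ((ℝ × ℝ) × ℝ × ℝ) :=
  {p | 0 < p.1.1 ∧ p.2.1 ^ 2 + p.2.2 ^ 2 ≤ 1}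

/-- The symbols of order `n`: linear combinations of the monomials of degree at least
`1 - n - 2 b`, where `sinh (t / 2)` and `rotSin` have degree `1` and `denom` has degree `2`. The
second condition on the exponents limits the growth as `t → ∞`. -/
def symbolClass (b : ℝ) (n : ℕ) : Submodule ℝ ((ℝ × ℝ) × ℝ × ℝ → ℝ) :=
  Submodule.span ℝ {f | ∃ i j l m k : ℕ,
    2 * k + 1 ≤ n + i + l ∧ i + j ≤ k + 1 ∧ f = symbolMonomial b i j l m k}

variable {b : ℝ} {n : ℕ} {f : (ℝ × ℝ) × ℝ × ℝ → ℝ} {p : (ℝ × ℝ) × ℝ × ℝ}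

lemma symbolMonomial_mem_symbolClass {i j l m k : ℕ} (hdeg : 2 * k + 1 ≤ n + i + l)
    (hgrowth : i + j ≤ k + 1) : symbolMonomial b i j l m k ∈ symbolClass b n :=
  Submodule.subset_span ⟨i, j, l, m, k, hdeg, hgrowth, rfl⟩

lemma rotCos_sq_add_rotSin_sq (θ : ℝ) (w : ℝ × ℝ) :
    rotCos θ w ^ 2 + rotSin θ w ^ 2 = w.1 ^ 2 + w.2 ^ 2 := by
  unfold rotCos rotSin
  linear_combination (w.1 ^ 2 + w.2 ^ 2) * sin_sq_add_cos_sq (θ / 2)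

lemma hasDerivAt_rotCos (θ : ℝ) (w : ℝ × ℝ) :
    HasDerivAt (fun x => rotCos x w) (rotSin θ w / 2) θ := by
  have half : HasDerivAt (fun x : ℝ => x / 2) (1 / 2) θ := (hasDerivAt_id θ).div_const 2
  refine ((half.sin.const_mul w.1).add (half.cos.const_mul w.2)).congr_deriv ?_
  unfold rotSin
  ring

lemma hasDerivAt_rotSin (θ : ℝ) (w : ℝ × ℝ) :
    HasDerivAt (fun x => rotSin x w) (-rotCos θ w / 2) θ := by
  have half : HasDerivAt (fun x : ℝ => x / 2) (1 / 2) θ := (hasDerivAt_id θ).div_const 2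
  refine ((half.cos.const_mul w.1).sub (half.sin.const_mul w.2)).congr_deriv ?_
  unfold rotCos
  ring

lemma abs_rotCos_le_one (hp : p ∈ symbolDomain) : |rotCos p.1.2 p.2| ≤ 1 := by
  rw [← sq_le_one_iff_abs_le_one]
  linarith [rotCos_sq_add_rotSin_sq p.1.2 p.2, sq_nonneg (rotSin p.1.2 p.2), hp.2]

lemma cosh_sub_one_le_denom (hp : p ∈ symbolDomain) : cosh (p.1.1 / 2) - 1 ≤ denom p :=
  sub_le_sub_left (le_of_abs_le (abs_rotCos_le_one hp)) _

lemma one_lt_cosh_half {t : ℝ} (ht : 0 < t) : 1 < cosh (t / 2) :=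
  one_lt_cosh.2 (by positivity)

lemma denom_pos (hp : p ∈ symbolDomain) : 0 < denom p :=
  (sub_pos.2 (one_lt_cosh_half hp.1)).trans_le (cosh_sub_one_le_denom hp)

lemma denom_le_two_mul_cosh (hp : p ∈ symbolDomain) : denom p ≤ 2 * cosh (p.1.1 / 2) := by
  unfold denom
  linarith [neg_le_of_abs_le (abs_rotCos_le_one hp), one_le_cosh (p.1.1 / 2)]

lemma sinh_sq_le_cosh_mul_denom (hp : p ∈ symbolDomain) :
    sinh (p.1.1 / 2) ^ 2 ≤ 2 * cosh (p.1.1 / 2) * denom p := by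
  nlinarith [cosh_sq (p.1.1 / 2), one_le_cosh (p.1.1 / 2), cosh_sub_one_le_denom hp]

lemma rotSin_sq_le_denom_div_cosh (hp : p ∈ symbolDomain) :
    rotSin p.1.2 p.2 ^ 2 ≤ 2 * denom p / cosh (p.1.1 / 2) := by
  have habs := abs_le.1 (abs_rotCos_le_one hp)
  have hcosh := one_le_cosh (p.1.1 / 2)
  have hdisc := hp.2
  have hsq := rotCos_sq_add_rotSin_sq p.1.2 p.2
  rw [le_div_iff₀ (cosh_pos _)]
  unfold denom
  nlinarith

lemma abs_pow_le_rpow_of_sq_le {x y : ℝ} (h : x ^ 2 ≤ y) (i : ℕ) : |x| ^ i ≤ y ^ ((i : ℝ) / 2) := by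
  have hy : 0 ≤ y := (sq_nonneg x).trans h
  rw [rpow_div_two_eq_sqrt _ hy, rpow_natCast]
  exact pow_le_pow_left₀ (abs_nonneg x) (abs_le_sqrt h) i

lemma abs_symbolMonomial_le {i j l m k : ℕ} (hp : p ∈ symbolDomain) :
    |symbolMonomial b i j l m k p| ≤
      2 ^ (((i : ℝ) + l) / 2) * cosh (p.1.1 / 2) ^ (((i : ℝ) - l) / 2 + j) *
        denom p ^ (((i : ℝ) + l) / 2 - k - b) := by
  have hE := denom_pos hp
  have hc := cosh_pos (p.1.1 / 2)
  have hX : |rotCos p.1.2 p.2| ^ m ≤ 1 := pow_le_one₀ (abs_nonneg _) (abs_rotCos_le_one hp)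
  have hs := abs_pow_le_rpow_of_sq_le (sinh_sq_le_cosh_mul_denom hp) i
  have hY := abs_pow_le_rpow_of_sq_le (rotSin_sq_le_denom_div_cosh hp) l
  unfold symbolMonomial
  rw [abs_mul, abs_mul, abs_mul, abs_mul, abs_pow, abs_pow, abs_pow, abs_pow,
    abs_of_pos hc, abs_of_pos (rpow_pos_of_pos hE _)]
  calc _ ≤ (2 * cosh (p.1.1 / 2) * denom p) ^ ((i : ℝ) / 2) * cosh (p.1.1 / 2) ^ j *
        (2 * denom p / cosh (p.1.1 / 2)) ^ ((l : ℝ) / 2) * 1 * denom p ^ (-(b + k)) := by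
        gcongr
    _ = _ := by
        rw [mul_rpow (by positivity) hE.le, mul_rpow zero_le_two hc.le,
          div_rpow (by positivity) hc.le, mul_rpow zero_le_two hE.le, ← rpow_natCast (cosh _) j]
        generalize cosh (p.1.1 / 2) = c at hc ⊢
        simp only [rpow_def_of_pos two_pos, rpow_def_of_pos hc, rpow_def_of_pos hE, div_eq_mul_inv,
          ← Real.exp_neg, ← Real.exp_add, mul_one]
        ring_nf

lemma abs_symbolMonomial_le_weight {i j l m k : ℕ} (hdeg : 2 * k + 1 ≤ n + i + l)
    (hgrowth : i + j ≤ k + 1) (hp : p ∈ symbolDomain) :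
    |symbolMonomial b i j l m k p| ≤
      2 ^ ((i : ℝ) + l + ((n : ℝ) - 1) / 2 - k) *
        (cosh (p.1.1 / 2) ^ (((n : ℝ) + 1) / 2) * denom p ^ (-(b + ((n : ℝ) - 1) / 2))) := by
  have hE := denom_pos hp
  have hc := cosh_pos (p.1.1 / 2)
  have hdeg' : (2 * k + 1 : ℝ) ≤ n + i + l := mod_cast hdeg
  have hgrowth' : (i + j : ℝ) ≤ k + 1 := mod_cast hgrowth
  set s : ℝ := ((i : ℝ) + l) / 2 + ((n : ℝ) - 1) / 2 - k with hs
  have hpow : denom p ^ s ≤ 2 ^ s * cosh (p.1.1 / 2) ^ s := by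
    rw [← mul_rpow zero_le_two hc.le]
    exact rpow_le_rpow hE.le (denom_le_two_mul_cosh hp) (by rw [hs]; linarith)
  calc _ ≤ _ := abs_symbolMonomial_le hp
    _ = 2 ^ (((i : ℝ) + l) / 2) * cosh (p.1.1 / 2) ^ (((i : ℝ) - l) / 2 + j) *
        (denom p ^ s * denom p ^ (-(b + ((n : ℝ) - 1) / 2))) := by
        rw [← rpow_add hE, hs]
        ring_nf
    _ ≤ 2 ^ (((i : ℝ) + l) / 2) * cosh (p.1.1 / 2) ^ (((i : ℝ) - l) / 2 + j) *
        (2 ^ s * cosh (p.1.1 / 2) ^ s * denom p ^ (-(b + ((n : ℝ) - 1) / 2))) := by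
        gcongr
    _ = 2 ^ (((i : ℝ) + l) / 2 + s) * (cosh (p.1.1 / 2) ^ (((i : ℝ) - l) / 2 + j + s) *
        denom p ^ (-(b + ((n : ℝ) - 1) / 2))) := by
        rw [rpow_add two_pos, rpow_add hc _ s]
        ring
    _ ≤ 2 ^ ((i : ℝ) + l + ((n : ℝ) - 1) / 2 - k) *
        (cosh (p.1.1 / 2) ^ (((n : ℝ) + 1) / 2) * denom p ^ (-(b + ((n : ℝ) - 1) / 2))) := by
        have h2 : ((i : ℝ) + l) / 2 + s = (i : ℝ) + l + ((n : ℝ) - 1) / 2 - k := by rw [hs]; ring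
        rw [h2]
        gcongr
        · exact one_le_cosh _
        · rw [hs]; linarith

lemma isBigO_of_mem_symbolClass (hf : f ∈ symbolClass b n) :
    f =O[Filter.principal symbolDomain] fun p =>
      cosh (p.1.1 / 2) ^ (((n : ℝ) + 1) / 2) * denom p ^ (-(b + ((n : ℝ) - 1) / 2)) := by
  induction hf using Submodule.span_induction with
  | mem f hf =>
    obtain ⟨i, j, l, m, k, hdeg, hgrowth, rfl⟩ := hf
    exact .of_bound (2 ^ ((i : ℝ) + l + ((n : ℝ) - 1) / 2 - k)) <|
      Filter.eventually_principal.2 fun p hp =>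
        (abs_symbolMonomial_le_weight hdeg hgrowth hp).trans (by gcongr; exact le_norm_self _)
  | zero => exact Asymptotics.isBigO_zero _ _
  | add f g _ _ hf hg => exact hf.add hg
  | smul r f _ hf => exact hf.const_smul_left r

lemma measurable_of_mem_symbolClass (hf : f ∈ symbolClass b n) : Measurable f := by
  induction hf using Submodule.span_induction with
  | mem f hf =>
    obtain ⟨i, j, l, m, k, -, -, rfl⟩ := hf
    unfold symbolMonomial denom rotSin rotCos
    fun_prop
  | zero => exact measurable_zero
  | add f g _ _ hf hg => exact hf.add hg
  | smul r f _ hf => exact hf.const_smul r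

lemma exists_hasDerivAt_of_mem_span {E : Type*} {S : Set (E → ℝ)} {V : Submodule ℝ (E → ℝ)}
    {D : Set E} {γ : E → ℝ → E} {s : E → ℝ}
    (hS : ∀ f ∈ S, ∃ g ∈ V, ∀ p ∈ D, HasDerivAt (fun x => f (γ p x)) (g p) (s p))
    {f : E → ℝ} (hf : f ∈ Submodule.span ℝ S) :
    ∃ g ∈ V, ∀ p ∈ D, HasDerivAt (fun x => f (γ p x)) (g p) (s p) := by
  induction hf using Submodule.span_induction with
  | mem f hf => exact hS f hf
  | zero => exact ⟨0, V.zero_mem, fun p _ => hasDerivAt_const (s p) (0 : ℝ)⟩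
  | add f₁ f₂ _ _ h₁ h₂ =>
    obtain ⟨g₁, hg₁, hd₁⟩ := h₁
    obtain ⟨g₂, hg₂, hd₂⟩ := h₂
    exact ⟨g₁ + g₂, V.add_mem hg₁ hg₂, fun p hp => (hd₁ p hp).add (hd₂ p hp)⟩
  | smul r f _ h =>
    obtain ⟨g, hg, hd⟩ := h
    exact ⟨r • g, V.smul_mem r hg, fun p hp => (hd p hp).const_mul r⟩

lemma hasDerivAt_symbolMonomial_time (b : ℝ) (i j l m k : ℕ) (hp : p ∈ symbolDomain) :
    HasDerivAt (fun t => symbolMonomial b i j l m k ((t, p.1.2), p.2))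
      (((i / 2 : ℝ) • symbolMonomial b (i - 1) (j + 1) l m k +
        (j / 2 : ℝ) • symbolMonomial b (i + 1) (j - 1) l m k +
        (-(b + k) / 2) • symbolMonomial b (i + 1) j l m (k + 1)) p) p.1.1 := by
  have half : HasDerivAt (fun t : ℝ => t / 2) (1 / 2) p.1.1 := (hasDerivAt_id _).div_const 2
  refine (((((half.sinh.pow i).mul (half.cosh.pow j)).mul_const (rotSin p.1.2 p.2 ^ l)).mul_const
    (rotCos p.1.2 p.2 ^ m)).mul ((half.cosh.sub_const (rotCos p.1.2 p.2)).rpow_const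
      (p := -(b + k)) (Or.inl (denom_pos hp).ne'))).congr_deriv ?_
  have exponent : -(b + (k : ℝ)) - 1 = -(b + ((k + 1 : ℕ) : ℝ)) := by push_cast; ring
  simp only [symbolMonomial, denom, Pi.add_apply, Pi.smul_apply, smul_eq_mul, exponent,
    Pi.mul_apply, Pi.pow_apply]
  ring

lemma hasDerivAt_symbolMonomial_angle (b : ℝ) (i j l m k : ℕ) (hp : p ∈ symbolDomain) :
    HasDerivAt (fun θ => symbolMonomial b i j l m k ((p.1.1, θ), p.2))
      (((-l / 2 : ℝ) • symbolMonomial b i j (l - 1) (m + 1) k +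
        (m / 2 : ℝ) • symbolMonomial b i j (l + 1) (m - 1) k +
        ((b + k) / 2) • symbolMonomial b i j (l + 1) m (k + 1)) p) p.1.2 := by
  have hX := hasDerivAt_rotCos p.1.2 p.2
  have hY := hasDerivAt_rotSin p.1.2 p.2
  refine ((((hY.pow l).const_mul (sinh (p.1.1 / 2) ^ i * cosh (p.1.1 / 2) ^ j)).mul
    (hX.pow m)).mul ((hX.const_sub (cosh (p.1.1 / 2))).rpow_const
      (p := -(b + k)) (Or.inl (denom_pos hp).ne'))).congr_deriv ?_
  have exponent : -(b + (k : ℝ)) - 1 = -(b + ((k + 1 : ℕ) : ℝ)) := by push_cast; ring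
  simp only [symbolMonomial, denom, Pi.add_apply, Pi.smul_apply, smul_eq_mul, exponent,
    Pi.mul_apply, Pi.pow_apply]
  ring

lemma exists_symbolClass_hasDerivAt_time (hf : f ∈ symbolClass b n) :
    ∃ g ∈ symbolClass b (n + 1), ∀ p ∈ symbolDomain,
      HasDerivAt (fun t => f ((t, p.1.2), p.2)) (g p) p.1.1 := by
  refine exists_hasDerivAt_of_mem_span (γ := fun p t => ((t, p.1.2), p.2)) ?_ hf
  rintro _ ⟨i, j, l, m, k, hdeg, hgrowth, rfl⟩
  refine ⟨_, add_mem (add_mem ?_ ?_) ?_, fun p hp => hasDerivAt_symbolMonomial_time b i j l m k hp⟩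
  · rcases i with _ | i
    · simp
    · exact Submodule.smul_mem _ _ (symbolMonomial_mem_symbolClass (by omega) (by omega))
  · rcases j with _ | j
    · simp
    · exact Submodule.smul_mem _ _ (symbolMonomial_mem_symbolClass (by omega) (by omega))
  · exact Submodule.smul_mem _ _ (symbolMonomial_mem_symbolClass (by omega) (by omega))

lemma exists_symbolClass_hasDerivAt_angle (hf : f ∈ symbolClass b n) :
    ∃ g ∈ symbolClass b (n + 1), ∀ p ∈ symbolDomain,
      HasDerivAt (fun θ => f ((p.1.1, θ), p.2)) (g p) p.1.2 := by
  refine exists_hasDerivAt_of_mem_span (γ := fun p θ => ((p.1.1, θ), p.2)) ?_ hf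
  rintro _ ⟨i, j, l, m, k, hdeg, hgrowth, rfl⟩
  refine ⟨_, add_mem (add_mem ?_ ?_) ?_, fun p hp => hasDerivAt_symbolMonomial_angle b i j l m k hp⟩
  · rcases l with _ | l
    · simp
    · exact Submodule.smul_mem _ _ (symbolMonomial_mem_symbolClass (by omega) (by omega))
  · rcases m with _ | m
    · simp
    · exact Submodule.smul_mem _ _ (symbolMonomial_mem_symbolClass (by omega) (by omega))
  · exact Submodule.smul_mem _ _ (symbolMonomial_mem_symbolClass (by omega) (by omega))

end Symbols

section WeightIntegrals

lemma intervalIntegrable_one_sub_sq_rpow {l : ℝ} (hl : 0 < l) :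
    IntervalIntegrable (fun u : ℝ => (1 - u ^ 2) ^ (l - 1)) volume (-1) 1 := by
  have hsub : IntervalIntegrable (fun u : ℝ => (1 - u) ^ (l - 1)) volume 0 1 := by
    simpa using
      ((intervalIntegral.intervalIntegrable_rpow' (a := 0) (b := 1) (r := l - 1)
        (by linarith)).comp_sub_left 1).symm
  have hright : IntervalIntegrable (fun u : ℝ => (1 - u ^ 2) ^ (l - 1)) volume 0 1 := by
    have hadd : ContinuousOn (fun u : ℝ => (1 + u) ^ (l - 1)) (uIcc 0 1) := by
      refine ContinuousOn.rpow_const (by fun_prop) fun u hu => Or.inl ?_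
      rw [uIcc_of_le zero_le_one] at hu
      linarith [hu.1]
    refine (hsub.mul_continuousOn hadd).congr fun u hu => ?_
    rw [uIoc_of_le zero_le_one] at hu
    have hfactor : 1 - u ^ 2 = (1 - u) * (1 + u) := by ring
    simp only [hfactor]
    exact (mul_rpow (by linarith [hu.2]) (by linarith [hu.1])).symm
  have hleft : IntervalIntegrable (fun u : ℝ => (1 - u ^ 2) ^ (l - 1)) volume (-1) 0 := by
    simpa using ((IntervalIntegrable.iff_comp_neg (by simp)).1 hright).symm
  exact hleft.trans hright

lemma ae_mem_Icc_PiMeasure (ν : ℝ) : ∀ᵐ u ∂PiMeasure ν, u ∈ Icc (-1 : ℝ) 1 := by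
  unfold PiMeasure
  split_ifs
  · apply Measure.ae_smul_measure
    rw [ae_add_measure_iff]
    constructor <;> simp [ae_dirac_eq]
  · exact (withDensity_absolutelyContinuous _ _).ae_le (ae_restrict_mem measurableSet_Icc)

lemma isFiniteMeasure_PiMeasure {ν : ℝ} (hν : -(1 / 2) ≤ ν) : IsFiniteMeasure (PiMeasure ν) := by
  unfold PiMeasure
  split_ifs with h
  · exact Measure.smul_finite _ (by simp)
  · have hl : 0 < ν + 1 / 2 := by linarith [hν.lt_of_ne' h]
    have hint := (intervalIntegrable_one_sub_sq_rpow hl).const_mul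
      (Real.Gamma (ν + 1) / (√π * Real.Gamma (ν + 1 / 2)))
    rw [intervalIntegrable_iff_integrableOn_Icc_of_le (by norm_num),
      show ν + 1 / 2 - 1 = ν - 1 / 2 by ring] at hint
    exact isFiniteMeasure_withDensity_ofReal hint.2

lemma integral_PiMeasure {ν : ℝ} (hν : -(1 / 2) < ν) (f : ℝ → ℝ) :
    ∫ u, f u ∂PiMeasure ν = Real.Gamma (ν + 1) / (√π * Real.Gamma (ν + 1 / 2)) *
      ∫ u in (-1 : ℝ)..1, (1 - u ^ 2) ^ (ν - 1 / 2) * f u := by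
  have hΓ₁ : 0 < Real.Gamma (ν + 1) := Real.Gamma_pos_of_pos (by linarith)
  have hΓ₂ : 0 < Real.Gamma (ν + 1 / 2) := Real.Gamma_pos_of_pos (by linarith)
  rw [PiMeasure, if_neg hν.ne',
    integral_withDensity_eq_integral_toReal_smul (by fun_prop) (by simp),
    ← intervalIntegral.integral_const_mul, intervalIntegral.integral_of_le (by norm_num),
    ← integral_Icc_eq_integral_Ioc]
  refine setIntegral_congr_fun measurableSet_Icc fun u hu => ?_
  have hu' : 0 ≤ 1 - u ^ 2 := by nlinarith [hu.1, hu.2]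
  rw [ENNReal.toReal_ofReal (by positivity), smul_eq_mul, mul_assoc]

variable {l δ D A : ℝ}

lemma hasDerivAt_beta_primitive (hl : l ≠ 0) (hδ : δ ≠ 0) {w : ℝ} (hw : 0 < w)
    (hE : 0 < D + w * A) (r s : ℝ) :
    HasDerivAt (fun w => r * (w ^ l * (D + w * A) ^ (-l) / l) - s * ((D + w * A) ^ (-δ) / δ))
      (r * (w ^ (l - 1) * (D + w * A) ^ (-l - 1) * D) + s * (A * (D + w * A) ^ (-δ - 1))) w := by
  have hlin : HasDerivAt (fun w : ℝ => D + w * A) A w := by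
    simpa using ((hasDerivAt_id w).mul_const A).const_add D
  have hpow : HasDerivAt (fun w : ℝ => w ^ l) (l * w ^ (l - 1)) w :=
    hasDerivAt_rpow_const (Or.inl hw.ne')
  have hdenom (x : ℝ) := hlin.rpow_const (p := x) (Or.inl hE.ne')
  refine ((((hpow.mul (hdenom (-l))).div_const l).const_mul r).sub
    (((hdenom (-δ)).div_const δ).const_mul s)).congr_deriv ?_
  have hw_split : w ^ l = w ^ (l - 1) * w := by rw [← rpow_add_one hw.ne', sub_add_cancel]
  have hE_split : (D + w * A) ^ (-l) = (D + w * A) ^ (-l - 1) * (D + w * A) := by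
    rw [← rpow_add_one hE.ne', sub_add_cancel]
  rw [hw_split, hE_split]
  field_simp
  ring

-- Split one factor `D + w * A` into its two terms; then `D ≤ D + w * A` controls the first
-- resulting term and `w * (D + A) ≤ D + w * A` the second.
lemma rpow_mul_rpow_le_deriv_beta_primitive (hl : 0 < l) (hδ : 0 < δ) (hD : 0 < D) (hA : 0 ≤ A)
    {w : ℝ} (hw : w ∈ Ioo (0 : ℝ) 1) :
    w ^ (l - 1) * (D + w * A) ^ (-(l + δ)) ≤
      D ^ (-δ) * (w ^ (l - 1) * (D + w * A) ^ (-l - 1) * D) +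
        (D + A) ^ (-l) * (A * (D + w * A) ^ (-δ - 1)) := by
  obtain ⟨hw0, hw1⟩ := hw
  have hwA : 0 ≤ w * A := by positivity
  have hE : 0 < D + w * A := by linarith
  have hDE : (D + w * A) ^ (-δ) ≤ D ^ (-δ) :=
    rpow_le_rpow_of_nonpos hD (by linarith) (by linarith)
  have hwE : w ^ l * (D + w * A) ^ (-l) ≤ (D + A) ^ (-l) := by
    rw [rpow_neg hE.le, rpow_neg (by positivity), ← div_eq_mul_inv, ← one_div,
      div_le_div_iff₀ (by positivity) (by positivity), one_mul, ← mul_rpow hw0.le (by positivity)]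
    exact rpow_le_rpow (by positivity) (by nlinarith) hl.le
  calc w ^ (l - 1) * (D + w * A) ^ (-(l + δ))
      = (D + w * A) ^ (-δ) * (w ^ (l - 1) * (D + w * A) ^ (-l - 1) * D) +
          w ^ l * (D + w * A) ^ (-l) * (A * (D + w * A) ^ (-δ - 1)) := by
        have hw_split : w ^ l = w ^ (l - 1) * w := by rw [← rpow_add_one hw0.ne', sub_add_cancel]
        rw [hw_split, rpow_sub_one hE.ne', rpow_sub_one hE.ne', neg_add, rpow_add hE]
        field_simp
    _ ≤ _ := by gcongr

lemma continuousOn_add_mul_rpow (hD : 0 < D) (hA : 0 ≤ A) (x : ℝ) :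
    ContinuousOn (fun w : ℝ => (D + w * A) ^ x) (Ici 0) :=
  ContinuousOn.rpow_const (by fun_prop) fun w hw =>
    Or.inl (add_pos_of_pos_of_nonneg hD (mul_nonneg hw hA)).ne'

lemma intervalIntegrable_rpow_mul_add_mul_rpow (hl : 0 < l) (hD : 0 < D) (hA : 0 ≤ A) (x : ℝ) :
    IntervalIntegrable (fun w : ℝ => w ^ (l - 1) * (D + w * A) ^ x) volume 0 1 := by
  refine (intervalIntegral.intervalIntegrable_rpow' (by linarith)).mul_continuousOn
    ((continuousOn_add_mul_rpow hD hA x).mono fun w hw => ?_)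
  rw [uIcc_of_le zero_le_one] at hw
  exact hw.1

lemma integral_rpow_mul_add_mul_rpow_le (hl : 0 < l) (hδ : 0 < δ) (hD : 0 < D) (hA : 0 ≤ A) :
    ∫ w in (0 : ℝ)..1, w ^ (l - 1) * (D + w * A) ^ (-(l + δ)) ≤
      (1 / l + 1 / δ) * (D ^ (-δ) * (D + A) ^ (-l)) := by
  have hcont (x : ℝ) : ContinuousOn (fun w : ℝ => (D + w * A) ^ x) (Icc 0 1) :=
    (continuousOn_add_mul_rpow hD hA x).mono fun w hw => hw.1
  have hpow : Continuous fun w : ℝ => w ^ l := continuous_id.rpow_const fun _ => Or.inr hl.le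
  refine (intervalIntegral.integral_le_sub_of_hasDeriv_right_of_le zero_le_one
    (g := fun w => D ^ (-δ) * (w ^ l * (D + w * A) ^ (-l) / l) -
      (D + A) ^ (-l) * ((D + w * A) ^ (-δ) / δ))
    ((((hpow.continuousOn.mul (hcont _)).div_const l).const_mul _).sub
      (((hcont _).div_const δ).const_mul _))
    (fun w hw => (hasDerivAt_beta_primitive hl.ne' hδ.ne' hw.1
      (add_pos_of_pos_of_nonneg hD (mul_nonneg hw.1.le hA)) _ _).hasDerivWithinAt)
    ((intervalIntegrable_iff_integrableOn_Icc_of_le zero_le_one).1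
      (intervalIntegrable_rpow_mul_add_mul_rpow hl hD hA _))
    (fun w hw => rpow_mul_rpow_le_deriv_beta_primitive hl hδ hD hA hw)).trans ?_
  have hrest : 0 ≤ (D + A) ^ (-l) * ((D + A) ^ (-δ) / δ) := by positivity
  simp only [one_rpow, one_mul, zero_rpow hl.ne', zero_mul, add_zero, zero_div, mul_zero]
  linear_combination hrest

lemma add_mul_rpow_le (hl : 0 ≤ l) (hδ : 0 ≤ δ) (hD : 0 < D) (hA : 0 ≤ A) {w : ℝ} (hw : 1 ≤ w) :
    (D + w * A) ^ (-(l + δ)) ≤ D ^ (-δ) * (D + A) ^ (-l) := by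
  have hAw : A ≤ w * A := le_mul_of_one_le_left hA hw
  have hle_D : (D + w * A) ^ (-δ) ≤ D ^ (-δ) :=
    rpow_le_rpow_of_nonpos hD (by linarith) (by linarith)
  have hle_DA : (D + w * A) ^ (-l) ≤ (D + A) ^ (-l) :=
    rpow_le_rpow_of_nonpos (by linarith) (by linarith) (by linarith)
  rw [neg_add, rpow_add (by linarith), mul_comm]
  gcongr

lemma one_add_rpow_sub_one_le (hl : 0 ≤ l) {u : ℝ} (hu : u ∈ Icc (0 : ℝ) 1) :
    (1 + u) ^ (l - 1) ≤ 2 ^ l :=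
  (rpow_le_rpow_of_exponent_le (by linarith [hu.1]) (by linarith)).trans
    (rpow_le_rpow (by linarith [hu.1]) (by linarith [hu.2]) hl)

lemma intervalIntegrable_one_sub_sq_rpow_mul (hl : 0 < l) (hD : 0 < D) (hA : 0 ≤ A) (x : ℝ) :
    IntervalIntegrable (fun u : ℝ => (1 - u ^ 2) ^ (l - 1) * (D + (1 - u) * A) ^ x)
      volume (-1) 1 := by
  refine (intervalIntegrable_one_sub_sq_rpow hl).mul_continuousOn
    ((continuousOn_add_mul_rpow hD hA x).comp (f := fun u : ℝ => 1 - u) (by fun_prop)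
      fun u hu => ?_)
  rw [uIcc_of_le (by norm_num)] at hu
  exact sub_nonneg.2 hu.2

lemma integral_left_one_sub_sq_rpow_mul_le (hl : 0 < l) (hδ : 0 ≤ δ) (hD : 0 < D) (hA : 0 ≤ A) :
    ∫ u in (-1 : ℝ)..0, (1 - u ^ 2) ^ (l - 1) * (D + (1 - u) * A) ^ (-(l + δ)) ≤
      (∫ u in (-1 : ℝ)..0, (1 - u ^ 2) ^ (l - 1)) * (D ^ (-δ) * (D + A) ^ (-l)) := by
  have hsub : uIcc (-1 : ℝ) 0 ⊆ uIcc (-1) 1 := by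
    rw [uIcc_of_le (by norm_num), uIcc_of_le (by norm_num)]
    exact Icc_subset_Icc_right zero_le_one
  rw [← intervalIntegral.integral_mul_const]
  refine intervalIntegral.integral_mono_on (by norm_num)
    ((intervalIntegrable_one_sub_sq_rpow_mul hl hD hA _).mono_set hsub)
    (((intervalIntegrable_one_sub_sq_rpow hl).mono_set hsub).mul_const _) fun u hu => ?_
  have hweight : 0 ≤ 1 - u ^ 2 := by nlinarith [hu.1, hu.2]
  gcongr
  exact add_mul_rpow_le hl.le hδ hD hA (by linarith [hu.2])

lemma integral_right_one_sub_sq_rpow_mul_le (hl : 0 < l) (hδ : 0 < δ) (hD : 0 < D) (hA : 0 ≤ A) :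
    ∫ u in (0 : ℝ)..1, (1 - u ^ 2) ^ (l - 1) * (D + (1 - u) * A) ^ (-(l + δ)) ≤
      2 ^ l * (1 / l + 1 / δ) * (D ^ (-δ) * (D + A) ^ (-l)) := by
  have hsub : uIcc (0 : ℝ) 1 ⊆ uIcc (-1) 1 := by
    rw [uIcc_of_le zero_le_one, uIcc_of_le (by norm_num)]
    exact Icc_subset_Icc_left (by norm_num)
  have hint : IntervalIntegrable
      (fun u : ℝ => (1 - u) ^ (l - 1) * (D + (1 - u) * A) ^ (-(l + δ))) volume 0 1 := by
    simpa using ((intervalIntegrable_rpow_mul_add_mul_rpow hl hD hA _).comp_sub_left 1).symm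
  calc ∫ u in (0 : ℝ)..1, (1 - u ^ 2) ^ (l - 1) * (D + (1 - u) * A) ^ (-(l + δ))
      ≤ ∫ u in (0 : ℝ)..1, 2 ^ l * ((1 - u) ^ (l - 1) * (D + (1 - u) * A) ^ (-(l + δ))) := by
        refine intervalIntegral.integral_mono_on zero_le_one
          ((intervalIntegrable_one_sub_sq_rpow_mul hl hD hA _).mono_set hsub)
          (hint.const_mul _) fun u hu => ?_
        have hu' : 0 ≤ 1 - u := sub_nonneg.2 hu.2
        have hfactor : 1 - u ^ 2 = (1 + u) * (1 - u) := by ring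
        rw [hfactor, mul_rpow (by linarith [hu.1]) hu', mul_assoc]
        gcongr
        exact one_add_rpow_sub_one_le hl.le hu
    _ = 2 ^ l * ∫ w in (0 : ℝ)..1, w ^ (l - 1) * (D + w * A) ^ (-(l + δ)) := by
        rw [intervalIntegral.integral_const_mul, intervalIntegral.integral_comp_sub_left
          (fun w => w ^ (l - 1) * (D + w * A) ^ (-(l + δ))) 1, sub_self, sub_zero]
    _ ≤ 2 ^ l * ((1 / l + 1 / δ) * (D ^ (-δ) * (D + A) ^ (-l))) := by
        gcongr
        exact integral_rpow_mul_add_mul_rpow_le hl hδ hD hA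
    _ = _ := (mul_assoc _ _ _).symm

lemma exists_integral_one_sub_sq_rpow_mul_le (hl : 0 < l) (hδ : 0 < δ) :
    ∃ C, 0 ≤ C ∧ ∀ D A : ℝ, 0 < D → 0 ≤ A →
      ∫ u in (-1 : ℝ)..1, (1 - u ^ 2) ^ (l - 1) * (D + (1 - u) * A) ^ (-(l + δ)) ≤
        C * (D ^ (-δ) * (D + A) ^ (-l)) := by
  refine ⟨(∫ u in (-1 : ℝ)..0, (1 - u ^ 2) ^ (l - 1)) + 2 ^ l * (1 / l + 1 / δ), ?_,
    fun D A hD hA => ?_⟩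
  · refine add_nonneg (intervalIntegral.integral_nonneg (by norm_num) fun u hu => ?_)
      (by positivity)
    exact rpow_nonneg (by nlinarith [hu.1, hu.2]) _
  · have hint := intervalIntegrable_one_sub_sq_rpow_mul hl hD hA (-(l + δ))
    have hmem : (0 : ℝ) ∈ uIcc (-1) 1 := by
      rw [uIcc_of_le (by norm_num)]
      norm_num
    rw [← intervalIntegral.integral_add_adjacent_intervals
      (hint.mono_set (uIcc_subset_uIcc_left hmem)) (hint.mono_set (uIcc_subset_uIcc_right hmem)),
      add_mul]
    exact add_le_add (integral_left_one_sub_sq_rpow_mul_le hl hδ.le hD hA)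
      (integral_right_one_sub_sq_rpow_mul_le hl hδ hD hA)

lemma exists_integral_PiMeasure_rpow_le {ν : ℝ} (hν : -(1 / 2) ≤ ν) (hδ : 0 < δ) :
    ∃ C, 0 ≤ C ∧ ∀ D A : ℝ, 0 < D → 0 ≤ A →
      ∫ u, (D + (1 - u) * A) ^ (-(ν + 1 / 2 + δ)) ∂PiMeasure ν ≤
        C * (D ^ (-δ) * (D + A) ^ (-(ν + 1 / 2))) := by
  rcases hν.eq_or_lt with rfl | hν
  · have hfin := isFiniteMeasure_PiMeasure (le_refl (-(1 / 2 : ℝ)))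
    refine ⟨(PiMeasure (-(1 / 2))).real univ, measureReal_nonneg, fun D A hD hA => ?_⟩
    have hle : ∀ᵐ u ∂PiMeasure (-(1 / 2)),
        D ≤ D + (1 - u) * A := (ae_mem_Icc_PiMeasure _).mono fun u hu =>
      le_add_of_nonneg_right (mul_nonneg (sub_nonneg.2 hu.2) hA)
    simp only [neg_add_cancel, zero_add, neg_zero, rpow_zero, mul_one]
    rw [← smul_eq_mul, ← integral_const]
    exact integral_mono_of_nonneg (hle.mono fun u hu => rpow_nonneg (hD.le.trans hu) _)
      (integrable_const _) (hle.mono fun u hu => rpow_le_rpow_of_nonpos hD hu (neg_nonpos.2 hδ.le))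
  · have hl : 0 < ν + 1 / 2 := by linarith
    obtain ⟨C, hC, hbound⟩ := exists_integral_one_sub_sq_rpow_mul_le hl hδ
    have hΓ₁ : 0 < Real.Gamma (ν + 1) := Real.Gamma_pos_of_pos (by linarith)
    have : 0 < Real.Gamma (ν + 1 / 2) := Real.Gamma_pos_of_pos hl
    refine ⟨Real.Gamma (ν + 1) / (√π * Real.Gamma (ν + 1 / 2)) * C, by positivity,
      fun D A hD hA => ?_⟩
    rw [integral_PiMeasure hν, mul_assoc, show ν - 1 / 2 = ν + 1 / 2 - 1 by ring]
    gcongr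
    exact hbound D A hD hA

end WeightIntegrals

section KernelMeans

variable {a c b δ : ℝ} {n : ℕ} {f g : (ℝ × ℝ) × ℝ × ℝ → ℝ}

lemma ae_mem_symbolDomain (ha : -(1 / 2) ≤ a) (hc : -(1 / 2) ≤ c) (φ : ℝ) :
    ∀ᵐ z ∂(PiMeasure a).prod (PiMeasure c), ∀ p : ℝ × ℝ, 0 < p.1 →
      (p, z.1 * sin (φ / 2), z.2 * cos (φ / 2)) ∈ symbolDomain := by
  have := isFiniteMeasure_PiMeasure ha
  have := isFiniteMeasure_PiMeasure hc
  filter_upwards [Measure.quasiMeasurePreserving_fst.ae (ae_mem_Icc_PiMeasure a),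
    Measure.quasiMeasurePreserving_snd.ae (ae_mem_Icc_PiMeasure c)] with z hu hv p hp
  have hu' : z.1 ^ 2 ≤ 1 := by nlinarith [hu.1, hu.2]
  have hv' : z.2 ^ 2 ≤ 1 := by nlinarith [hv.1, hv.2]
  refine ⟨hp, ?_⟩
  simp only [mul_pow]
  nlinarith [sin_sq_add_cos_sq (φ / 2), sq_nonneg (sin (φ / 2)), sq_nonneg (cos (φ / 2))]

lemma exists_abs_le_of_mem_symbolClass (hb : 1 ≤ b) (hf : f ∈ symbolClass b n) {r R : ℝ}
    (hr : 0 < r) : ∃ C, ∀ p ∈ symbolDomain, p.1.1 ∈ Icc r R → |f p| ≤ C := by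
  obtain ⟨C, hC, hbound⟩ := (isBigO_of_mem_symbolClass hf).exists_nonneg
  refine ⟨C * (cosh (R / 2) ^ (((n : ℝ) + 1) / 2) *
    (cosh (r / 2) - 1) ^ (-(b + ((n : ℝ) - 1) / 2))), fun p hp ht => ?_⟩
  have hr' : 0 < cosh (r / 2) - 1 := sub_pos.2 (one_lt_cosh_half hr)
  have hcosh {x y : ℝ} (hx : 0 < x) (hxy : x ≤ y) : cosh (x / 2) ≤ cosh (y / 2) := by
    rw [cosh_le_cosh, abs_of_pos (by linarith), abs_of_pos (by linarith)]
    linarith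
  have hdenom : cosh (r / 2) - 1 ≤ denom p :=
    (sub_le_sub_right (hcosh hr ht.1) 1).trans (cosh_sub_one_le_denom hp)
  have : (0 : ℝ) ≤ n := n.cast_nonneg
  refine (Filter.eventually_principal.1 hbound.bound p hp).trans ?_
  rw [norm_of_nonneg (mul_nonneg (rpow_nonneg (cosh_pos _).le _)
    (rpow_nonneg (denom_pos hp).le _))]
  have hdenom_rpow : denom p ^ (-(b + ((n : ℝ) - 1) / 2)) ≤
      (cosh (r / 2) - 1) ^ (-(b + ((n : ℝ) - 1) / 2)) :=
    rpow_le_rpow_of_nonpos hr' hdenom (by linarith)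
  have hcosh_rpow : cosh (p.1.1 / 2) ^ (((n : ℝ) + 1) / 2) ≤
      cosh (R / 2) ^ (((n : ℝ) + 1) / 2) :=
    rpow_le_rpow (cosh_pos _).le (hcosh hp.1 ht.2) (by positivity)
  exact mul_le_mul_of_nonneg_left (mul_le_mul hcosh_rpow hdenom_rpow
    (rpow_nonneg (denom_pos hp).le _) (rpow_nonneg (cosh_pos _).le _)) hC

/-- The average over `u` and `v`, distributed according to `Π_a` and `Π_c`, of the values of the
symbol `f` at `((t, θ), (u sin (φ / 2), v cos (φ / 2)))`, where `p = (t, θ)`. -/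
noncomputable def kernelMean (a c : ℝ) (f : (ℝ × ℝ) × ℝ × ℝ → ℝ) (p : ℝ × ℝ) (φ : ℝ) : ℝ :=
  ∫ z, f (p, z.1 * sin (φ / 2), z.2 * cos (φ / 2)) ∂(PiMeasure a).prod (PiMeasure c)

lemma aestronglyMeasurable_kernelMean_integrand (hf : f ∈ symbolClass b n) (p : ℝ × ℝ) (φ : ℝ) :
    AEStronglyMeasurable (fun z : ℝ × ℝ => f (p, z.1 * sin (φ / 2), z.2 * cos (φ / 2)))
      ((PiMeasure a).prod (PiMeasure c)) :=
  ((measurable_of_mem_symbolClass hf).comp (by fun_prop)).aestronglyMeasurable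

lemma integrable_kernelMean_integrand (ha : -(1 / 2) ≤ a) (hc : -(1 / 2) ≤ c) (hb : 1 ≤ b)
    (hf : f ∈ symbolClass b n) {p : ℝ × ℝ} (hp : 0 < p.1) (φ : ℝ) :
    Integrable (fun z : ℝ × ℝ => f (p, z.1 * sin (φ / 2), z.2 * cos (φ / 2)))
      ((PiMeasure a).prod (PiMeasure c)) := by
  have := isFiniteMeasure_PiMeasure ha
  have := isFiniteMeasure_PiMeasure hc
  obtain ⟨C, hC⟩ := exists_abs_le_of_mem_symbolClass (R := p.1) hb hf hp
  exact Integrable.of_bound (aestronglyMeasurable_kernelMean_integrand hf p φ) C <|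
    (ae_mem_symbolDomain ha hc φ).mono fun z hz => hC _ (hz p hp) ⟨le_rfl, le_rfl⟩

lemma hasDerivAt_kernelMean_comp {m : ℕ} (ha : -(1 / 2) ≤ a) (hc : -(1 / 2) ≤ c) (hb : 1 ≤ b)
    (hf : f ∈ symbolClass b n) (hg : g ∈ symbolClass b m) {γ : ℝ → ℝ × ℝ} {x₀ : ℝ}
    (hγ : ContinuousAt γ x₀) (hx₀ : 0 < (γ x₀).1)
    (hderiv : ∀ x w, (γ x, w) ∈ symbolDomain →
      HasDerivAt (fun y => f (γ y, w)) (g (γ x, w)) x) (φ : ℝ) :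
    HasDerivAt (fun x => kernelMean a c f (γ x) φ) (kernelMean a c g (γ x₀) φ) x₀ := by
  have := isFiniteMeasure_PiMeasure ha
  have := isFiniteMeasure_PiMeasure hc
  obtain ⟨C, hC⟩ := exists_abs_le_of_mem_symbolClass (R := 2 * (γ x₀).1) hb hg (half_pos hx₀)
  have hnhds : {x | (γ x).1 ∈ Icc ((γ x₀).1 / 2) (2 * (γ x₀).1)} ∈ nhds x₀ :=
    hγ.fst (Icc_mem_nhds (by linarith) (by linarith))
  have hsupp := ae_mem_symbolDomain ha hc φ
  refine (hasDerivAt_integral_of_dominated_loc_of_deriv_le (bound := fun _ => C)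
    (F' := fun x (z : ℝ × ℝ) => g (γ x, z.1 * sin (φ / 2), z.2 * cos (φ / 2))) hnhds
    (.of_forall fun x => aestronglyMeasurable_kernelMean_integrand hf (γ x) φ)
    (integrable_kernelMean_integrand ha hc hb hf hx₀ φ)
    (aestronglyMeasurable_kernelMean_integrand hg (γ x₀) φ) ?_ (integrable_const C) ?_).2
  · exact hsupp.mono fun z hz x hx => hC _ (hz _ ((half_pos hx₀).trans_le hx.1)) hx
  · exact hsupp.mono fun z hz x hx => hderiv x _ (hz _ ((half_pos hx₀).trans_le hx.1))

lemma exists_hasDerivAt_kernelMean_time (ha : -(1 / 2) ≤ a) (hc : -(1 / 2) ≤ c) (hb : 1 ≤ b)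
    (hf : f ∈ symbolClass b n) :
    ∃ g ∈ symbolClass b (n + 1), ∀ t, 0 < t → ∀ θ φ,
      HasDerivAt (fun s => kernelMean a c f (s, θ) φ) (kernelMean a c g (t, θ) φ) t := by
  obtain ⟨g, hg, hderiv⟩ := exists_symbolClass_hasDerivAt_time hf
  exact ⟨g, hg, fun t ht θ φ => hasDerivAt_kernelMean_comp (γ := fun s => (s, θ)) ha hc hb hf hg
    (by fun_prop) ht (fun s w hw => hderiv _ hw) φ⟩

lemma exists_hasDerivAt_kernelMean_angle (ha : -(1 / 2) ≤ a) (hc : -(1 / 2) ≤ c) (hb : 1 ≤ b)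
    (hf : f ∈ symbolClass b n) :
    ∃ g ∈ symbolClass b (n + 1), ∀ t, 0 < t → ∀ θ φ,
      HasDerivAt (fun s => kernelMean a c f (t, s) φ) (kernelMean a c g (t, θ) φ) θ := by
  obtain ⟨g, hg, hderiv⟩ := exists_symbolClass_hasDerivAt_angle hf
  exact ⟨g, hg, fun t ht θ φ => hasDerivAt_kernelMean_comp (γ := fun s => (t, s)) ha hc hb hf hg
    (by fun_prop) ht (fun s w hw => hderiv _ hw) φ⟩

lemma exists_iteratedDeriv_eq_of_hasDerivAt {ι X : Type*} {V : ℕ → Set X} {F : X → ι → ℝ → ℝ}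
    {U : Set ℝ} (hU : IsOpen U)
    (hF : ∀ n, ∀ f ∈ V n, ∃ g ∈ V (n + 1), ∀ i, ∀ x ∈ U, HasDerivAt (F f i) (F g i x) x)
    (k : ℕ) {n : ℕ} {f : X} (hf : f ∈ V n) :
    ∃ g ∈ V (n + k), ∀ i, ∀ x ∈ U, iteratedDeriv k (F f i) x = F g i x := by
  induction k with
  | zero => exact ⟨f, hf, fun i x _ => congrFun iteratedDeriv_zero x⟩
  | succ k ih =>
    obtain ⟨g, hg, hfg⟩ := ih
    obtain ⟨h, hh, hgh⟩ := hF (n + k) g hg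
    refine ⟨h, hh, fun i x hx => ?_⟩
    have hlocal : iteratedDeriv k (F f i) =ᶠ[nhds x] F g i :=
      Filter.eventually_of_mem (hU.mem_nhds hx) (hfg i)
    rw [iteratedDeriv_succ, hlocal.deriv_eq, (hgh i x hx).deriv]

lemma exists_iteratedDeriv_kernelMean (ha : -(1 / 2) ≤ a) (hc : -(1 / 2) ≤ c) (hb : 1 ≤ b)
    (hf : f ∈ symbolClass b n) (K e : ℕ) :
    ∃ g ∈ symbolClass b (n + K + e), ∀ t, 0 < t → ∀ θ φ,
      iteratedDeriv e (fun θ' => iteratedDeriv K (fun t' => kernelMean a c f (t', θ') φ) t) θ =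
        kernelMean a c g (t, θ) φ := by
  obtain ⟨h, hh, hfh⟩ := exists_iteratedDeriv_eq_of_hasDerivAt (ι := ℝ × ℝ)
    (V := fun m => (symbolClass b m : Set ((ℝ × ℝ) × ℝ × ℝ → ℝ)))
    (F := fun f i t => kernelMean a c f (t, i.1) i.2) isOpen_Ioi
    (fun m f hf => by
      obtain ⟨g, hg, hfg⟩ := exists_hasDerivAt_kernelMean_time ha hc hb hf
      exact ⟨g, hg, fun i t ht => hfg t ht i.1 i.2⟩) K hf
  obtain ⟨g, hg, hhg⟩ := exists_iteratedDeriv_eq_of_hasDerivAt (ι := Ioi (0 : ℝ) × ℝ)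
    (V := fun m => (symbolClass b m : Set ((ℝ × ℝ) × ℝ × ℝ → ℝ)))
    (F := fun f i θ => kernelMean a c f (i.1, θ) i.2) isOpen_univ
    (fun m f hf => by
      obtain ⟨g, hg, hfg⟩ := exists_hasDerivAt_kernelMean_angle ha hc hb hf
      exact ⟨g, hg, fun i θ _ => hfg i.1 i.1.2 θ i.2⟩) e hh
  refine ⟨g, hg, fun t ht θ φ => ?_⟩
  rw [← hhg (⟨t, ht⟩, φ) θ (mem_univ θ)]
  congr 1
  exact funext fun θ' => hfh (θ', φ) t ht

lemma exists_symbol_Hker_eq (ha : -(1 / 2) ≤ a) (hc : -(1 / 2) ≤ c) :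
    ∃ f ∈ symbolClass (a + c + 2) 0, ∀ t, 0 < t → ∀ θ φ,
      Hker a c t θ φ = kernelMean a c f (t, θ) φ := by
  have := isFiniteMeasure_PiMeasure ha
  have := isFiniteMeasure_PiMeasure hc
  have hf : ((2 : ℝ) ^ (-(a + c + 2)) / (jacobiMeasure a c (Ioo 0 π)).toReal) •
      symbolMonomial (a + c + 2) 1 0 0 0 0 ∈ symbolClass (a + c + 2) 0 :=
    Submodule.smul_mem _ _ (symbolMonomial_mem_symbolClass (by norm_num) (by norm_num))
  refine ⟨_, hf, fun t ht θ φ => ?_⟩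
  have hint := integrable_kernelMean_integrand (p := (t, θ)) ha hc (by linarith) hf ht φ
  have hdenom (u v : ℝ) : cosh (t / 2) - 1 + qfun θ φ u v =
      denom ((t, θ), u * sin (φ / 2), v * cos (φ / 2)) := by
    unfold qfun denom rotCos
    ring
  simp only [Hker, kernelMean, integral_prod _ hint, ← integral_const_mul, hdenom]
  refine integral_congr_ae ?_
  filter_upwards [Measure.ae_ae_of_ae_prod (ae_mem_symbolDomain ha hc φ)] with u hu
  refine integral_congr_ae (hu.mono fun v hv => ?_)
  simp only [Pi.smul_apply, symbolMonomial, smul_eq_mul, pow_one, pow_zero, mul_one,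
    Nat.cast_zero, add_zero, one_div, rpow_neg (denom_pos (hv (t, θ) ht)).le, mul_assoc]

lemma exists_symbol_iteratedDeriv_Hker (ha : -(1 / 2) ≤ a) (hc : -(1 / 2) ≤ c) (K e : ℕ) :
    ∃ g ∈ symbolClass (a + c + 2) (K + e), ∀ t, 0 < t → ∀ θ φ,
      iteratedDeriv e (fun θ' => iteratedDeriv K (fun t' => Hker a c t' θ' φ) t) θ =
        kernelMean a c g (t, θ) φ := by
  obtain ⟨f, hf, hHker⟩ := exists_symbol_Hker_eq ha hc
  obtain ⟨g, hg, hfg⟩ := exists_iteratedDeriv_kernelMean ha hc (by linarith) hf K e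
  refine ⟨g, by simpa only [zero_add] using hg, fun t ht θ φ => ?_⟩
  rw [← hfg t ht θ φ]
  congr 1
  funext θ'
  exact Filter.EventuallyEq.iteratedDeriv_eq K <|
    Filter.eventually_of_mem (Ioi_mem_nhds ht) fun s hs => hHker s hs θ' φ

lemma integrable_PiMeasure_rpow (ha : -(1 / 2) ≤ a) {D A x : ℝ} (hD : 0 < D) (hA : 0 ≤ A)
    (hx : x ≤ 0) : Integrable (fun u => (D + (1 - u) * A) ^ x) (PiMeasure a) := by
  have := isFiniteMeasure_PiMeasure ha
  refine Integrable.of_bound (Measurable.aestronglyMeasurable (by fun_prop)) (D ^ x)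
    ((ae_mem_Icc_PiMeasure a).mono fun u hu => ?_)
  have hle : D ≤ D + (1 - u) * A :=
    le_add_of_nonneg_right (mul_nonneg (sub_nonneg.2 hu.2) hA)
  rw [norm_of_nonneg (rpow_nonneg (hD.le.trans hle) _)]
  exact rpow_le_rpow_of_nonpos hD hle hx

lemma exists_abs_integral_prod_PiMeasure_le (ha : -(1 / 2) ≤ a) (hc : -(1 / 2) ≤ c) (hδ : 0 < δ) :
    ∃ C, 0 ≤ C ∧ ∀ (F : ℝ × ℝ → ℝ) (M D A B : ℝ), 0 ≤ M → 0 < D → 0 ≤ A → 0 ≤ B →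
      (∀ᵐ z ∂(PiMeasure a).prod (PiMeasure c),
        |F z| ≤ M * (D + (1 - z.1) * A + (1 - z.2) * B) ^ (-(a + c + 1 + 2 * δ))) →
      |∫ z, F z ∂(PiMeasure a).prod (PiMeasure c)| ≤
        C * M * (D ^ (-(2 * δ)) * (D + A) ^ (-(a + 1 / 2)) * (D + B) ^ (-(c + 1 / 2))) := by
  have := isFiniteMeasure_PiMeasure ha
  have := isFiniteMeasure_PiMeasure hc
  obtain ⟨C₁, hC₁, hbound₁⟩ := exists_integral_PiMeasure_rpow_le ha hδ
  obtain ⟨C₂, hC₂, hbound₂⟩ := exists_integral_PiMeasure_rpow_le hc hδ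
  refine ⟨C₁ * C₂, mul_nonneg hC₁ hC₂, fun F M D A B hM hD hA hB hF => ?_⟩
  have hsplit : ∀ᵐ z ∂(PiMeasure a).prod (PiMeasure c), ‖F z‖ ≤
      M * ((D + (1 - z.1) * A) ^ (-(a + 1 / 2 + δ)) *
        (D + (1 - z.2) * B) ^ (-(c + 1 / 2 + δ))) := by
    filter_upwards [hF, Measure.quasiMeasurePreserving_fst.ae (ae_mem_Icc_PiMeasure a),
      Measure.quasiMeasurePreserving_snd.ae (ae_mem_Icc_PiMeasure c)] with z hz hu hv
    have hA' : 0 ≤ (1 - z.1) * A := mul_nonneg (sub_nonneg.2 hu.2) hA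
    have hB' : 0 ≤ (1 - z.2) * B := mul_nonneg (sub_nonneg.2 hv.2) hB
    refine hz.trans (mul_le_mul_of_nonneg_left ?_ hM)
    rw [show -(a + c + 1 + 2 * δ) = -(a + 1 / 2 + δ) + -(c + 1 / 2 + δ) by ring,
      rpow_add (by positivity)]
    exact mul_le_mul (rpow_le_rpow_of_nonpos (by positivity) (by linarith) (by linarith))
      (rpow_le_rpow_of_nonpos (by positivity) (by linarith) (by linarith))
      (by positivity) (by positivity)
  calc _ ≤ ∫ z, M * ((D + (1 - z.1) * A) ^ (-(a + 1 / 2 + δ)) *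
          (D + (1 - z.2) * B) ^ (-(c + 1 / 2 + δ))) ∂(PiMeasure a).prod (PiMeasure c) :=
        norm_integral_le_of_norm_le (((integrable_PiMeasure_rpow ha hD hA (by linarith)).mul_prod
          (integrable_PiMeasure_rpow hc hD hB (by linarith))).const_mul M) hsplit
    _ = M * ((∫ u, (D + (1 - u) * A) ^ (-(a + 1 / 2 + δ)) ∂PiMeasure a) *
          ∫ v, (D + (1 - v) * B) ^ (-(c + 1 / 2 + δ)) ∂PiMeasure c) := by
        rw [integral_const_mul, integral_prod_mul (fun u : ℝ => (D + (1 - u) * A) ^ _)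
          (fun v : ℝ => (D + (1 - v) * B) ^ _)]
    _ ≤ M * (C₁ * (D ^ (-δ) * (D + A) ^ (-(a + 1 / 2))) *
          (C₂ * (D ^ (-δ) * (D + B) ^ (-(c + 1 / 2))))) := by
        gcongr
        · exact integral_nonneg_of_ae ((ae_mem_Icc_PiMeasure c).mono fun v hv => rpow_nonneg
            (add_nonneg hD.le (mul_nonneg (sub_nonneg.2 hv.2) hB)) _)
        · exact hbound₁ D A hD hA
        · exact hbound₂ D B hD hB
    _ = _ := by
        rw [show -(2 * δ) = -δ + -δ by ring, rpow_add hD]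
        ring

lemma sin_half_nonneg {x : ℝ} (hx : x ∈ Ioo 0 π) : 0 ≤ sin (x / 2) :=
  sin_nonneg_of_nonneg_of_le_pi (by linarith [hx.1]) (by linarith [hx.1, hx.2])

lemma cos_half_nonneg {x : ℝ} (hx : x ∈ Ioo 0 π) : 0 ≤ cos (x / 2) :=
  cos_nonneg_of_mem_Icc ⟨by linarith [hx.1, pi_pos], by linarith [hx.2]⟩

lemma one_sub_div_cosh_pos {t X : ℝ} (ht : 0 < t) (hX : X ≤ 1) : 0 < 1 - X / cosh (t / 2) :=
  sub_pos.2 ((div_lt_one (cosh_pos _)).2 (hX.trans_lt (one_lt_cosh_half ht)))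

lemma exists_abs_kernelMean_le (ha : -(1 / 2) ≤ a) (hc : -(1 / 2) ≤ c)
    (hf : f ∈ symbolClass (a + c + 2) n) :
    ∃ C, 0 ≤ C ∧ ∀ t, 0 < t → ∀ θ ∈ Ioo 0 π, ∀ φ ∈ Ioo 0 π,
      |kernelMean a c f (t, θ) φ| ≤ C * cosh (t / 2) ^ (-(a + c + 1)) *
        ((1 - cos ((θ - φ) / 2) / cosh (t / 2)) ^ (-(((n : ℝ) + 1) / 2)) *
          (1 - cos (θ / 2) * cos (φ / 2) / cosh (t / 2)) ^ (-(a + 1 / 2)) *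
          (1 - sin (θ / 2) * sin (φ / 2) / cosh (t / 2)) ^ (-(c + 1 / 2))) := by
  obtain ⟨C₁, hC₁, hsymbol⟩ := (isBigO_of_mem_symbolClass hf).exists_nonneg
  obtain ⟨C₂, hC₂, hintegral⟩ := exists_abs_integral_prod_PiMeasure_le ha hc
    (δ := ((n : ℝ) + 1) / 4) (by positivity)
  refine ⟨C₂ * C₁, mul_nonneg hC₂ hC₁, fun t ht θ hθ φ hφ => ?_⟩
  have hcosh : 0 < cosh (t / 2) := cosh_pos _
  have hcos_sub : cos ((θ - φ) / 2) =
      cos (θ / 2) * cos (φ / 2) + sin (θ / 2) * sin (φ / 2) := by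
    rw [sub_div, cos_sub]
  have hmean := hintegral (fun z => f ((t, θ), z.1 * sin (φ / 2), z.2 * cos (φ / 2)))
    (C₁ * cosh (t / 2) ^ (-(a + c + 1))) _ (sin (θ / 2) * sin (φ / 2) / cosh (t / 2))
    (cos (θ / 2) * cos (φ / 2) / cosh (t / 2)) (mul_nonneg hC₁ (rpow_nonneg hcosh.le _))
    (one_sub_div_cosh_pos ht (cos_le_one ((θ - φ) / 2)))
    (div_nonneg (mul_nonneg (sin_half_nonneg hθ) (sin_half_nonneg hφ)) hcosh.le)
    (div_nonneg (mul_nonneg (cos_half_nonneg hθ) (cos_half_nonneg hφ)) hcosh.le) ?_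
  · refine hmean.trans_eq ?_
    rw [show 2 * (((n : ℝ) + 1) / 4) = ((n : ℝ) + 1) / 2 by ring, hcos_sub]
    ring_nf
  · filter_upwards [ae_mem_symbolDomain ha hc φ] with z hz
    have hp := hz (t, θ) ht
    have hdenom : 1 - cos ((θ - φ) / 2) / cosh (t / 2) +
        (1 - z.1) * (sin (θ / 2) * sin (φ / 2) / cosh (t / 2)) +
        (1 - z.2) * (cos (θ / 2) * cos (φ / 2) / cosh (t / 2)) =
          denom ((t, θ), z.1 * sin (φ / 2), z.2 * cos (φ / 2)) / cosh (t / 2) := by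
      rw [hcos_sub, denom, rotCos]
      field_simp
      ring
    refine (Filter.eventually_principal.1 hsymbol.bound _ hp).trans_eq ?_
    rw [norm_of_nonneg (mul_nonneg (rpow_nonneg hcosh.le _) (rpow_nonneg (denom_pos hp).le _)),
      hdenom, div_rpow (denom_pos hp).le hcosh.le, mul_assoc C₁, ← mul_div_assoc,
      mul_div_right_comm, ← rpow_sub hcosh]
    ring_nf

end KernelMeans

section Geometry

variable {t θ φ : ℝ}

lemma add_div_two_pi_sq_le_one_sub_cos_mul_cos (hθ : θ ∈ Ioo 0 π) (hφ : φ ∈ Ioo 0 π) :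
    ((θ + φ) / (2 * π)) ^ 2 ≤ 1 - cos (θ / 2) * cos (φ / 2) := by
  have hcos_add : cos ((θ + φ) / 2) ≤ 1 - 2 / π ^ 2 * ((θ + φ) / 2) ^ 2 := by
    refine cos_le_one_sub_mul_cos_sq (abs_le.2 ⟨?_, ?_⟩) <;>
      linarith [hθ.1, hθ.2, hφ.1, hφ.2]
  have hprod : 2 * (cos (θ / 2) * cos (φ / 2)) = cos ((θ + φ) / 2) + cos ((θ - φ) / 2) := by
    rw [add_div, sub_div, cos_add, cos_sub]
    ring
  have hscale : ((θ + φ) / (2 * π)) ^ 2 = 2 / π ^ 2 * ((θ + φ) / 2) ^ 2 / 2 := by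
    field_simp
  linarith [cos_le_one ((θ - φ) / 2)]

lemma two_pi_sub_div_two_pi_sq_le_one_sub_sin_mul_sin (hθ : θ ∈ Ioo 0 π) (hφ : φ ∈ Ioo 0 π) :
    ((2 * π - θ - φ) / (2 * π)) ^ 2 ≤ 1 - sin (θ / 2) * sin (φ / 2) := by
  have hreflect {x : ℝ} (hx : x ∈ Ioo 0 π) : π - x ∈ Ioo 0 π :=
    ⟨sub_pos.2 hx.2, sub_lt_self π hx.1⟩
  have h := add_div_two_pi_sq_le_one_sub_cos_mul_cos (hreflect hθ) (hreflect hφ)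
  rw [sub_div, sub_div, cos_pi_div_two_sub, cos_pi_div_two_sub] at h
  convert h using 3
  ring

lemma one_sub_le_one_sub_div_cosh {X : ℝ} (hX : 0 ≤ X) (t : ℝ) : 1 - X ≤ 1 - X / cosh t :=
  sub_le_sub_left (div_le_self hX (one_le_cosh t)) 1

lemma one_add_sq_div_two_le_cosh (x : ℝ) : 1 + x ^ 2 / 2 ≤ cosh x := by
  have hsinh : (x / 2) ^ 2 ≤ sinh (x / 2) ^ 2 := by
    rw [sq_le_sq, abs_sinh]
    exact self_le_sinh_iff.2 (abs_nonneg _)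
  have hcosh : cosh x = 1 + 2 * sinh (x / 2) ^ 2 := by
    rw [← mul_div_cancel₀ x two_ne_zero, cosh_two_mul, cosh_sq]
    ring_nf
  linarith

lemma one_sub_cos_sub_div_cosh_le_mul (hθ : θ ∈ Ioo 0 π) (hφ : φ ∈ Ioo 0 π) (ht : 0 < t) :
    1 - cos ((θ - φ) / 2) / cosh (t / 2) ≤
      4 * ((1 - cos (θ / 2) * cos (φ / 2) / cosh (t / 2)) *
        (1 - sin (θ / 2) * sin (φ / 2) / cosh (t / 2))) := by
  have hcosh : 0 < cosh (t / 2) := cosh_pos _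
  have hss : 0 ≤ sin (θ / 2) * sin (φ / 2) :=
    mul_nonneg (sin_half_nonneg hθ) (sin_half_nonneg hφ)
  have hcc : 0 ≤ cos (θ / 2) * cos (φ / 2) :=
    mul_nonneg (cos_half_nonneg hθ) (cos_half_nonneg hφ)
  have hD : 0 < 1 - cos ((θ - φ) / 2) / cosh (t / 2) := one_sub_div_cosh_pos ht (cos_le_one _)
  have hcos : cos ((θ - φ) / 2) / cosh (t / 2) =
      cos (θ / 2) * cos (φ / 2) / cosh (t / 2) + sin (θ / 2) * sin (φ / 2) / cosh (t / 2) := by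
    rw [sub_div, cos_sub, add_div]
  have hss' := div_nonneg hss hcosh.le
  have hcc' := div_nonneg hcc hcosh.le
  have hquarter {x : ℝ} (hx : π ≤ x) : 1 / 4 ≤ (x / (2 * π)) ^ 2 := by
    have : 1 / 2 ≤ x / (2 * π) := by
      rw [div_le_div_iff₀ two_pos two_pi_pos]
      linarith
    nlinarith
  rcases le_total π (θ + φ) with hsum | hsum
  · have hE := (hquarter hsum).trans ((add_div_two_pi_sq_le_one_sub_cos_mul_cos hθ hφ).trans
      (one_sub_le_one_sub_div_cosh hcc (t / 2)))
    nlinarith [hE]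
  · have hF := (hquarter (by linarith : π ≤ 2 * π - θ - φ)).trans
      ((two_pi_sub_div_two_pi_sq_le_one_sub_sin_mul_sin hθ hφ).trans
        (one_sub_le_one_sub_div_cosh hss (t / 2)))
    nlinarith [hF]

lemma sq_add_sq_le_mul_one_sub_cos_div_cosh {d : ℝ} (hd : |d| ≤ π) (t : ℝ) :
    t ^ 2 + d ^ 2 ≤ 2 * π ^ 2 * ((1 + t ^ 2) * (1 - cos (d / 2) / cosh (t / 2))) := by
  obtain ⟨hd₁, hd₂⟩ := abs_le.1 hd
  have hcos : cos (d / 2) ≤ 1 - 2 / π ^ 2 * (d / 2) ^ 2 :=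
    cos_le_one_sub_mul_cos_sq (abs_le.2 ⟨by linarith [pi_pos], by linarith [pi_pos]⟩)
  have hcos0 : 0 ≤ cos (d / 2) := cos_nonneg_of_mem_Icc ⟨by linarith, by linarith⟩
  have hcosh : 1 + t ^ 2 / 8 ≤ cosh (t / 2) := by linarith [one_add_sq_div_two_le_cosh (t / 2)]
  have hquot : cos (d / 2) / cosh (t / 2) * (1 + t ^ 2 / 8) ≤ cos (d / 2) := by
    rw [div_mul_eq_mul_div, div_le_iff₀ (cosh_pos _)]
    exact mul_le_mul_of_nonneg_left hcosh hcos0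
  have hscale : 2 * π ^ 2 * (2 / π ^ 2 * (d / 2) ^ 2) = d ^ 2 := by
    field_simp
  have hquot_le : cos (d / 2) / cosh (t / 2) ≤ 1 :=
    (div_le_one (cosh_pos _)).2 ((cos_le_one _).trans (one_le_cosh _))
  have hpi : 4 ≤ π ^ 2 := by nlinarith [pi_gt_three]
  have hD : t ^ 2 / 8 + 2 / π ^ 2 * (d / 2) ^ 2 ≤
      (1 + t ^ 2) * (1 - cos (d / 2) / cosh (t / 2)) := by
    nlinarith [sq_nonneg t]
  nlinarith [sq_nonneg t, mul_le_mul_of_nonneg_left hD (by positivity : 0 ≤ 2 * π ^ 2)]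

end Geometry

section PointwiseBound

lemma rpow_neg_le_of_sq_le {r E x : ℝ} (hr : 0 < r) (hx : 0 ≤ x) (h : r ^ 2 ≤ E) :
    E ^ (-x) ≤ r ^ (-(2 * x)) := by
  calc E ^ (-x) ≤ (r ^ 2) ^ (-x) := rpow_le_rpow_of_nonpos (by positivity) h (by linarith)
    _ = r ^ (-(2 * x)) := by
      rw [← rpow_natCast, ← rpow_mul hr.le]
      congr 1
      push_cast
      ring

lemma rpow_mul_rpow_mul_rpow_le {D E F r s p q x y σ : ℝ} (hD : 0 < D) (hD1 : D ≤ 1)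
    (hE : 0 < E) (hF : 0 < F) (hDEF : D ≤ 4 * (E * F)) (hr : 0 < r) (hs : 0 < s)
    (hrE : r ^ 2 ≤ E) (hsF : s ^ 2 ≤ F) (hx : 0 ≤ x) (hy : 0 ≤ y) (hσ : 0 ≤ σ)
    (hq : p + σ ≤ q) :
    D ^ (-p) * E ^ (-(x + σ)) * F ^ (-(y + σ)) ≤
      4 ^ σ * (r ^ (-(2 * x)) * s ^ (-(2 * y)) * D ^ (-q)) := by
  have hEF : (E * F) ^ (-σ) ≤ 4 ^ σ * D ^ (-σ) := by
    rw [rpow_neg hD.le, ← div_eq_mul_inv, ← div_rpow (by norm_num) hD.le, ← inv_div,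
      inv_rpow (by positivity), ← rpow_neg (by positivity)]
    exact rpow_le_rpow_of_nonpos (by positivity) ((div_le_iff₀' (by norm_num)).2 hDEF)
      (by linarith)
  calc D ^ (-p) * E ^ (-(x + σ)) * F ^ (-(y + σ)) =
        D ^ (-p) * (E ^ (-x) * F ^ (-y) * (E * F) ^ (-σ)) := by
        rw [neg_add, neg_add, rpow_add hE, rpow_add hF, mul_rpow hE.le hF.le]
        ring
    _ ≤ D ^ (-p) * (r ^ (-(2 * x)) * s ^ (-(2 * y)) * (4 ^ σ * D ^ (-σ))) := by
        gcongr
        · exact rpow_neg_le_of_sq_le hr hx hrE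
        · exact rpow_neg_le_of_sq_le hs hy hsF
    _ = 4 ^ σ * (r ^ (-(2 * x)) * s ^ (-(2 * y)) * D ^ (-p + -σ)) := by
        rw [rpow_add hD]
        ring
    _ ≤ 4 ^ σ * (r ^ (-(2 * x)) * s ^ (-(2 * y)) * D ^ (-q)) := by
        gcongr 4 ^ σ * (_ * ?_)
        exact rpow_le_rpow_of_exponent_ge hD hD1 (by linarith)

lemma exists_one_add_sq_rpow_mul_cosh_rpow_le {q k : ℝ} (hq : 0 < q) (hk : 0 < k) :
    ∃ C, 0 ≤ C ∧ ∀ t, 0 ≤ t → (1 + t ^ 2) ^ q * cosh (t / 2) ^ (-k) ≤ C := by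
  set M := max 1 (8 * q ^ 2 / k ^ 2)
  refine ⟨M ^ q * 2 ^ k, by positivity, fun t ht => ?_⟩
  have hexp : 1 + t ^ 2 ≤ M * exp (k / (2 * q) * t) := by
    have hquad : 1 + (k / (2 * q) * t) ^ 2 / 2 ≤ exp (k / (2 * q) * t) :=
      (quadratic_le_exp_of_nonneg (by positivity)).trans' (by
        have : 0 ≤ k / (2 * q) * t := by positivity
        linarith)
    have ht2 : t ^ 2 = 8 * q ^ 2 / k ^ 2 * ((k / (2 * q) * t) ^ 2 / 2) := by
      field_simp
      norm_num
    calc 1 + t ^ 2 ≤ M * 1 + M * ((k / (2 * q) * t) ^ 2 / 2) := by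
          rw [mul_one, ht2]
          gcongr
          · exact le_max_left _ _
          · exact le_max_right _ _
      _ ≤ M * exp (k / (2 * q) * t) := by
          rw [← mul_add]
          gcongr
  have hcosh : exp (t / 2) ≤ 2 * cosh (t / 2) := by
    rw [cosh_eq]
    linarith [exp_pos (-(t / 2))]
  calc (1 + t ^ 2) ^ q * cosh (t / 2) ^ (-k)
      ≤ (M * exp (k / (2 * q) * t)) ^ q * cosh (t / 2) ^ (-k) := by
        gcongr
    _ = M ^ q * (exp (t / 2) ^ k * cosh (t / 2) ^ (-k)) := by
        rw [mul_rpow (by positivity) (exp_pos _).le, ← exp_mul, ← exp_mul,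
          show k / (2 * q) * t * q = t / 2 * k by field_simp, mul_assoc]
    _ ≤ M ^ q * ((2 * cosh (t / 2)) ^ k * cosh (t / 2) ^ (-k)) := by
        gcongr
    _ = M ^ q * 2 ^ k := by
        rw [mul_rpow two_pos.le (cosh_pos _).le, mul_assoc, ← rpow_add (cosh_pos _),
          add_neg_cancel, rpow_zero, mul_one]

lemma rpow_neg_one_sub_cos_div_cosh_le {t d q : ℝ} (ht : 0 < t) (hd : |d| ≤ π) (hq : 0 ≤ q) :
    (1 - cos (d / 2) / cosh (t / 2)) ^ (-q) ≤
      (2 * π ^ 2) ^ q * (1 + t ^ 2) ^ q * (t ^ 2 + d ^ 2) ^ (-q) := by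
  have hD : 0 < 1 - cos (d / 2) / cosh (t / 2) := one_sub_div_cosh_pos ht (cos_le_one _)
  rw [← mul_rpow (by positivity) (by positivity), rpow_neg hD.le,
    rpow_neg (by positivity : 0 ≤ t ^ 2 + d ^ 2), ← div_eq_mul_inv,
    ← div_rpow (by positivity) (by positivity), ← inv_rpow hD.le]
  refine rpow_le_rpow (by positivity) ?_ hq
  rw [le_div_iff₀ (by positivity), inv_mul_le_iff₀ hD]
  linarith [sq_add_sq_le_mul_one_sub_cos_div_cosh hd t]

lemma exists_cosh_rpow_mul_rpow_mul_rpow_le {k p q x y σ : ℝ} (hk : 0 < k) (hq0 : 0 < q)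
    (hx : 0 ≤ x) (hy : 0 ≤ y) (hσ : 0 ≤ σ) (hq : p + σ ≤ q) :
    ∃ C, 0 ≤ C ∧ ∀ t, 0 < t → ∀ θ ∈ Ioo 0 π, ∀ φ ∈ Ioo 0 π,
      cosh (t / 2) ^ (-k) * ((1 - cos ((θ - φ) / 2) / cosh (t / 2)) ^ (-p) *
          (1 - cos (θ / 2) * cos (φ / 2) / cosh (t / 2)) ^ (-(x + σ)) *
          (1 - sin (θ / 2) * sin (φ / 2) / cosh (t / 2)) ^ (-(y + σ))) ≤
        C * ((θ + φ) ^ (-(2 * x)) * (2 * π - θ - φ) ^ (-(2 * y)) *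
          (t ^ 2 + (θ - φ) ^ 2) ^ (-q)) := by
  obtain ⟨C, hC, hcosh⟩ := exists_one_add_sq_rpow_mul_cosh_rpow_le hq0 hk
  refine ⟨C * (4 ^ σ * (2 * π ^ 2) ^ q) / ((2 * π) ^ (-(2 * x)) * (2 * π) ^ (-(2 * y))),
    by positivity, fun t ht θ hθ φ hφ => ?_⟩
  have hr : 0 < θ + φ := add_pos hθ.1 hφ.1
  have hs : 0 < 2 * π - θ - φ := by linarith [hθ.2, hφ.2]
  have hd : |θ - φ| ≤ π := abs_le.2 ⟨by linarith [hθ.1, hφ.2], by linarith [hθ.2, hφ.1]⟩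
  have hcc := mul_nonneg (cos_half_nonneg hθ) (cos_half_nonneg hφ)
  have hss := mul_nonneg (sin_half_nonneg hθ) (sin_half_nonneg hφ)
  have hrE := (add_div_two_pi_sq_le_one_sub_cos_mul_cos hθ hφ).trans
    (one_sub_le_one_sub_div_cosh hcc (t / 2))
  have hsF := (two_pi_sub_div_two_pi_sq_le_one_sub_sin_mul_sin hθ hφ).trans
    (one_sub_le_one_sub_div_cosh hss (t / 2))
  have hD : 0 < 1 - cos ((θ - φ) / 2) / cosh (t / 2) := one_sub_div_cosh_pos ht (cos_le_one _)
  have hD1 : 1 - cos ((θ - φ) / 2) / cosh (t / 2) ≤ 1 := by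
    rw [sub_div, cos_sub]
    exact sub_le_self 1 (div_nonneg (add_nonneg hcc hss) (cosh_pos _).le)
  calc _ ≤ cosh (t / 2) ^ (-k) * (4 ^ σ * (((θ + φ) / (2 * π)) ^ (-(2 * x)) *
          ((2 * π - θ - φ) / (2 * π)) ^ (-(2 * y)) *
          (1 - cos ((θ - φ) / 2) / cosh (t / 2)) ^ (-q))) :=
        mul_le_mul_of_nonneg_left (rpow_mul_rpow_mul_rpow_le hD hD1
          (hrE.trans_lt' (by positivity)) (hsF.trans_lt' (by positivity))
          (one_sub_cos_sub_div_cosh_le_mul hθ hφ ht) (by positivity) (by positivity)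
          hrE hsF hx hy hσ hq) (rpow_nonneg (cosh_pos _).le _)
    _ ≤ cosh (t / 2) ^ (-k) * (4 ^ σ * (((θ + φ) / (2 * π)) ^ (-(2 * x)) *
          ((2 * π - θ - φ) / (2 * π)) ^ (-(2 * y)) *
          ((2 * π ^ 2) ^ q * (1 + t ^ 2) ^ q * (t ^ 2 + (θ - φ) ^ 2) ^ (-q)))) := by
        gcongr
        exact rpow_neg_one_sub_cos_div_cosh_le ht hd hq0.le
    _ = (1 + t ^ 2) ^ q * cosh (t / 2) ^ (-k) * (4 ^ σ * (2 * π ^ 2) ^ q) /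
          ((2 * π) ^ (-(2 * x)) * (2 * π) ^ (-(2 * y))) * ((θ + φ) ^ (-(2 * x)) *
          (2 * π - θ - φ) ^ (-(2 * y)) * (t ^ 2 + (θ - φ) ^ 2) ^ (-q)) := by
        rw [div_rpow hr.le two_pi_pos.le, div_rpow hs.le two_pi_pos.le]
        ring
    _ ≤ _ := by
        gcongr
        exact hcosh t ht.le

lemma exists_abs_iteratedDeriv_Hker_le {a c σ q : ℝ} {K e : ℕ} (ha : -(1 / 2) ≤ a)
    (hc : -(1 / 2) ≤ c) (hac : 0 < a + c + 1) (hσ : 0 ≤ σ) (hσa : σ ≤ a + 1 / 2)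
    (hσc : σ ≤ c + 1 / 2) (hq : ((K + e : ℕ) + 1 : ℝ) / 2 + σ ≤ q) :
    ∃ C, 0 ≤ C ∧ ∀ t, 0 < t → ∀ θ ∈ Ioo 0 π, ∀ φ ∈ Ioo 0 π,
      |iteratedDeriv e (fun θ' => iteratedDeriv K (fun t' => Hker a c t' θ' φ) t) θ| ≤
        C * ((θ + φ) ^ (-(2 * (a + 1 / 2 - σ))) * (2 * π - θ - φ) ^ (-(2 * (c + 1 / 2 - σ))) *
          (t ^ 2 + (θ - φ) ^ 2) ^ (-q)) := by
  obtain ⟨g, hg, hHker⟩ := exists_symbol_iteratedDeriv_Hker ha hc K e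
  obtain ⟨C₁, hC₁, hmean⟩ := exists_abs_kernelMean_le ha hc hg
  obtain ⟨C₂, hC₂, hpowers⟩ := exists_cosh_rpow_mul_rpow_mul_rpow_le hac
    (hq.trans_lt' (by positivity)) (sub_nonneg.2 hσa) (sub_nonneg.2 hσc) hσ hq
  simp only [sub_add_cancel] at hpowers
  refine ⟨C₁ * C₂, mul_nonneg hC₁ hC₂, fun t ht θ hθ φ hφ => ?_⟩
  rw [hHker t ht]
  refine (hmean t ht θ hθ φ hφ).trans ?_
  rw [mul_assoc, mul_assoc C₁ C₂]
  exact mul_le_mul_of_nonneg_left (hpowers t ht θ hθ φ hφ) hC₁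

end PointwiseBound

section TimeIntegral

variable {L : ℕ} {d : ℝ}

lemma hasDerivAt_sq_div_sq_add_sq_pow (hL : L ≠ 0) (hd : d ≠ 0) (t : ℝ) :
    HasDerivAt (fun t : ℝ => (t ^ 2 / (t ^ 2 + d ^ 2)) ^ L / (2 * L * d ^ 2))
      (t ^ (2 * L - 1) * ((t ^ 2 + d ^ 2) ^ (L + 1))⁻¹) t := by
  have hpos : 0 < t ^ 2 + d ^ 2 := by positivity
  have hsq : HasDerivAt (fun t : ℝ => t ^ 2) (2 * t) t := by simpa using hasDerivAt_pow 2 t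
  refine (((hsq.div (hsq.add_const (d ^ 2)) hpos.ne').pow L).div_const _).congr_deriv ?_
  obtain ⟨k, rfl⟩ := Nat.exists_eq_succ_of_ne_zero hL
  simp only [Nat.succ_eq_add_one, show 2 * (k + 1) - 1 = 2 * k + 1 by omega,
    Nat.add_sub_cancel, Pi.div_apply, div_pow, ← pow_mul]
  have : ((k + 1 : ℕ) : ℝ) ≠ 0 := Nat.cast_ne_zero.2 k.succ_ne_zero
  field_simp
  ring

lemma tendsto_sq_div_sq_add_sq_pow (L : ℕ) (d : ℝ) :
    Filter.Tendsto (fun t : ℝ => (t ^ 2 / (t ^ 2 + d ^ 2)) ^ L / (2 * L * d ^ 2))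
      Filter.atTop (nhds (1 / (2 * L * d ^ 2))) := by
  have hdenom : Filter.Tendsto (fun t : ℝ => t ^ 2 + d ^ 2) Filter.atTop Filter.atTop :=
    Filter.tendsto_atTop_add_const_right _ _ (Filter.tendsto_pow_atTop two_ne_zero)
  have hratio : Filter.Tendsto (fun t : ℝ => t ^ 2 / (t ^ 2 + d ^ 2)) Filter.atTop (nhds 1) := by
    rw [← sub_zero (1 : ℝ)]
    refine ((hdenom.const_div_atTop (d ^ 2)).const_sub 1).congr' ?_
    filter_upwards [Filter.eventually_gt_atTop 0] with t ht
    field_simp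
    ring
  simpa only [one_pow] using (hratio.pow L).div_const (2 * L * d ^ 2)

lemma integrableOn_pow_mul_inv_sq_add_sq_pow (hL : L ≠ 0) (hd : d ≠ 0) :
    IntegrableOn (fun t : ℝ => t ^ (2 * L - 1) * ((t ^ 2 + d ^ 2) ^ (L + 1))⁻¹) (Ioi 0) :=
  integrableOn_Ioi_deriv_of_nonneg' (fun t _ => hasDerivAt_sq_div_sq_add_sq_pow hL hd t)
    (fun t (ht : 0 < t) => by positivity) (tendsto_sq_div_sq_add_sq_pow L d)

lemma integral_pow_mul_inv_sq_add_sq_pow (hL : L ≠ 0) (hd : d ≠ 0) :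
    ∫ t in Ioi (0 : ℝ), t ^ (2 * L - 1) * ((t ^ 2 + d ^ 2) ^ (L + 1))⁻¹ =
      1 / (2 * L * d ^ 2) := by
  rw [integral_Ioi_of_hasDerivAt_of_nonneg'
    (fun t _ => hasDerivAt_sq_div_sq_add_sq_pow hL hd t)
    (fun t (ht : 0 < t) => by positivity) (tendsto_sq_div_sq_add_sq_pow L d)]
  simp only [ne_eq, OfNat.ofNat_ne_zero, not_false_eq_true, zero_pow, zero_div, hL, sub_zero]

lemma sqrt_integral_sq_mul_pow_le {F : ℝ → ℝ} {M : ℝ} (hL : L ≠ 0) (hd : 0 < d) (hM : 0 ≤ M)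
    (hF : ∀ t, 0 < t → |F t| ≤ M * (t ^ 2 + d ^ 2) ^ (-(((L : ℝ) + 1) / 2))) :
    √(∫ t in Ioi (0 : ℝ), F t ^ 2 * t ^ (2 * L - 1)) ≤ M / d := by
  have hF_sq {t : ℝ} (ht : 0 < t) : F t ^ 2 ≤ M ^ 2 * ((t ^ 2 + d ^ 2) ^ (L + 1))⁻¹ := by
    have hpos : 0 < t ^ 2 + d ^ 2 := by positivity
    calc F t ^ 2 ≤ (M * (t ^ 2 + d ^ 2) ^ (-(((L : ℝ) + 1) / 2))) ^ 2 :=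
          sq_le_sq.2 ((hF t ht).trans (le_abs_self _))
      _ = M ^ 2 * ((t ^ 2 + d ^ 2) ^ (L + 1))⁻¹ := by
          rw [mul_pow, ← rpow_natCast (_ ^ _) 2, ← rpow_mul hpos.le, ← rpow_natCast _ (L + 1),
            ← rpow_neg hpos.le]
          congr 2
          push_cast
          ring
  refine sqrt_le_iff.2 ⟨by positivity, ?_⟩
  calc ∫ t in Ioi (0 : ℝ), F t ^ 2 * t ^ (2 * L - 1)
      ≤ ∫ t in Ioi (0 : ℝ), M ^ 2 * (t ^ (2 * L - 1) * ((t ^ 2 + d ^ 2) ^ (L + 1))⁻¹) := by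
        refine integral_mono_of_nonneg ?_
          ((integrableOn_pow_mul_inv_sq_add_sq_pow hL hd.ne').const_mul _) ?_ <;>
        filter_upwards [ae_restrict_mem measurableSet_Ioi] with t (ht : 0 < t)
        · exact mul_nonneg (sq_nonneg _) (pow_nonneg ht.le _)
        · exact (mul_le_mul_of_nonneg_right (hF_sq ht) (pow_nonneg ht.le _)).trans_eq (by ring)
    _ = M ^ 2 * (1 / (2 * L * d ^ 2)) := by
        rw [integral_const_mul, integral_pow_mul_inv_sq_add_sq_pow hL hd.ne']
    _ ≤ M ^ 2 * (1 / (1 * d ^ 2)) := by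
        have : (1 : ℝ) ≤ L := Nat.one_le_cast.2 (Nat.one_le_iff_ne_zero.2 hL)
        gcongr
        linarith
    _ = (M / d) ^ 2 := by
        rw [one_mul, div_pow, mul_one_div]

end TimeIntegral

section BallMeasure

variable {α β θ φ : ℝ}

lemma measurableSet_jacobiBall (θ r : ℝ) : MeasurableSet (jacobiBall θ r) :=
  measurableSet_Ioo.inter measurableSet_Ioo

lemma jacobiMeasure_jacobiBall_pos {r : ℝ} (hθ : θ ∈ Ioo 0 π) (hr : 0 < r) :
    0 < jacobiMeasure α β (jacobiBall θ r) := by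
  have hsubset : jacobiBall θ r ⊆ {x | ENNReal.ofReal (sin (x / 2) ^ (2 * α + 1) *
      cos (x / 2) ^ (2 * β + 1)) ≠ 0} ∩ jacobiBall θ r := by
    refine fun x hx => ⟨(ENNReal.ofReal_pos.2 (mul_pos ?_ ?_)).ne', hx⟩
    · exact rpow_pos_of_pos (sin_pos_of_pos_of_lt_pi (by linarith [hx.2.1])
        (by linarith [hx.2.1, hx.2.2])) _
    · exact rpow_pos_of_pos (cos_pos_of_mem_Ioo
        ⟨by linarith [hx.2.1, pi_pos], by linarith [hx.2.2]⟩) _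
  refine pos_iff_ne_zero.2 fun hzero => ?_
  rw [jacobiMeasure, withDensity_apply_eq_zero (by fun_prop)] at hzero
  have hnull := measure_mono_null hsubset hzero
  rw [Measure.restrict_apply (measurableSet_jacobiBall θ r)] at hnull
  have hopen : IsOpen (jacobiBall θ r ∩ Ioo 0 π) := (isOpen_Ioo.inter isOpen_Ioo).inter isOpen_Ioo
  exact (hopen.measure_pos volume
    ⟨θ, ⟨⟨sub_lt_self θ hr, lt_add_of_pos_right θ hr⟩, hθ⟩, hθ⟩).ne' hnull

lemma sin_rpow_mul_cos_rpow_le (hα : -(1 / 2) ≤ α) (hβ : -(1 / 2) ≤ β) (hθ : θ ∈ Ioo 0 π)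
    (hφ : φ ∈ Ioo 0 π) {x : ℝ} (hx : x ∈ jacobiBall θ |θ - φ|) :
    sin (x / 2) ^ (2 * α + 1) * cos (x / 2) ^ (2 * β + 1) ≤
      (θ + φ) ^ (2 * α + 1) * (2 * π - θ - φ) ^ (2 * β + 1) := by
  obtain ⟨⟨hx₁, hx₂⟩, hx⟩ := hx
  have hd : |θ - φ| ≤ θ + φ := abs_le.2 ⟨by linarith [hθ.1, hφ.1], by linarith [hθ.1, hφ.1]⟩
  have hd' : |θ - φ| ≤ 2 * π - θ - φ :=
    abs_le.2 ⟨by linarith [hθ.2, hφ.2], by linarith [hθ.2, hφ.2]⟩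
  have hsin : sin (x / 2) ≤ θ + φ := by
    linarith [sin_le (half_pos hx.1).le, hφ.1]
  have hcos : cos (x / 2) ≤ 2 * π - θ - φ := by
    rw [← sin_pi_div_two_sub]
    linarith [sin_le (by linarith [hx.2] : 0 ≤ π / 2 - x / 2), hφ.2]
  have hsin0 := sin_half_nonneg hx
  have hcos0 := cos_half_nonneg hx
  have : 0 ≤ 2 * α + 1 := by linarith
  have : 0 ≤ 2 * β + 1 := by linarith
  gcongr
  exact rpow_nonneg (hsin0.trans hsin) _

lemma jacobiMeasure_jacobiBall_le (hα : -(1 / 2) ≤ α) (hβ : -(1 / 2) ≤ β) (hθ : θ ∈ Ioo 0 π)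
    (hφ : φ ∈ Ioo 0 π) :
    jacobiMeasure α β (jacobiBall θ |θ - φ|) ≤
      ENNReal.ofReal ((θ + φ) ^ (2 * α + 1) * (2 * π - θ - φ) ^ (2 * β + 1)) *
        ENNReal.ofReal (2 * |θ - φ|) := by
  rw [jacobiMeasure, withDensity_apply _ (measurableSet_jacobiBall θ _)]
  calc _ ≤ ∫⁻ _ in jacobiBall θ |θ - φ|, ENNReal.ofReal ((θ + φ) ^ (2 * α + 1) *
          (2 * π - θ - φ) ^ (2 * β + 1)) ∂volume.restrict (Ioo 0 π) :=
        setLIntegral_mono measurable_const fun x hx =>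
          ENNReal.ofReal_le_ofReal (sin_rpow_mul_cos_rpow_le hα hβ hθ hφ hx)
    _ = ENNReal.ofReal ((θ + φ) ^ (2 * α + 1) * (2 * π - θ - φ) ^ (2 * β + 1)) *
          volume.restrict (Ioo 0 π) (jacobiBall θ |θ - φ|) := setLIntegral_const _ _
    _ ≤ ENNReal.ofReal ((θ + φ) ^ (2 * α + 1) * (2 * π - θ - φ) ^ (2 * β + 1)) *
          volume (Ioo (θ - |θ - φ|) (θ + |θ - φ|)) := by
        exact mul_le_mul' le_rfl
          ((Measure.restrict_apply_le _ _).trans (measure_mono inter_subset_left))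
    _ = _ := by
        rw [Real.volume_Ioo]
        ring_nf

lemma toReal_jacobiMeasure_jacobiBall_pos_and_le (hα : -(1 / 2) ≤ α) (hβ : -(1 / 2) ≤ β)
    (hθ : θ ∈ Ioo 0 π) (hφ : φ ∈ Ioo 0 π) (hne : θ ≠ φ) :
    0 < (jacobiMeasure α β (jacobiBall θ |θ - φ|)).toReal ∧
    (jacobiMeasure α β (jacobiBall θ |θ - φ|)).toReal ≤
      (θ + φ) ^ (2 * α + 1) * (2 * π - θ - φ) ^ (2 * β + 1) * (2 * |θ - φ|) := by
  have hle := jacobiMeasure_jacobiBall_le hα hβ hθ hφ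
  have hr : 0 < θ + φ := add_pos hθ.1 hφ.1
  have hs : 0 < 2 * π - θ - φ := by linarith [hθ.2, hφ.2]
  rw [← ENNReal.ofReal_mul (by positivity)] at hle
  exact ⟨ENNReal.toReal_pos (jacobiMeasure_jacobiBall_pos hθ (abs_pos.2 (sub_ne_zero.2 hne))).ne'
    (ne_top_of_le_ne_top ENNReal.ofReal_ne_top hle), ENNReal.toReal_le_of_le_ofReal
      (by positivity) hle⟩

end BallMeasure

end JacobiPoisson

theorem square_function_kernel_growth_general {α β τ γ : ℝ} {L K ε₁ : ℕ}
    (hα : -(1 / 2) ≤ α) (hβ : -(1 / 2) ≤ β) (hαβ : -1 < α + β + 2 * τ) (hL : L ≠ 0)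
    (hγ : 0 ≤ γ) (hγτ : γ ≤ 2 * τ) (hcond : ε₁ + K + 2 * τ - γ ≤ L) :
    ∃ C : ℝ, 0 < C ∧
      ∀ θ ∈ Ioo (0 : ℝ) π, ∀ φ ∈ Ioo (0 : ℝ) π, θ ≠ φ →
        √(∫ t in Ioi (0 : ℝ),
            (iteratedDeriv ε₁
                (fun θ' => iteratedDeriv K
                  (fun t' => Hker (α + τ) (β + τ) t' θ' φ) t) θ) ^ 2 *
              t ^ (2 * L - 1))
          ≤ C * (θ + φ) ^ (-γ) * (2 * π - θ - φ) ^ (-γ) /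
              (jacobiMeasure α β (jacobiBall θ |θ - φ|)).toReal := by
  obtain ⟨C, hC, hbound⟩ := JacobiPoisson.exists_abs_iteratedDeriv_Hker_le (K := K) (e := ε₁)
    (a := α + τ) (c := β + τ) (σ := τ - γ / 2) (q := ((L : ℝ) + 1) / 2) (by linarith)
    (by linarith) (by linarith) (by linarith) (by linarith) (by linarith)
    (by push_cast; linarith)
  refine ⟨2 * C + 1, by positivity, fun θ hθ φ hφ hne => ?_⟩
  have hr : 0 < θ + φ := add_pos hθ.1 hφ.1
  have hs : 0 < 2 * π - θ - φ := by linarith [hθ.2, hφ.2]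
  have hd : 0 < |θ - φ| := abs_pos.2 (sub_ne_zero.2 hne)
  obtain ⟨hball_pos, hball_le⟩ :=
    JacobiPoisson.toReal_jacobiMeasure_jacobiBall_pos_and_le hα hβ hθ hφ hne
  have hweight {r x : ℝ} (hr : 0 < r) :
      r ^ (-(2 * (x + τ + 1 / 2 - (τ - γ / 2)))) = r ^ (-γ) / r ^ (2 * x + 1) := by
    rw [← rpow_sub hr]
    ring_nf
  refine (JacobiPoisson.sqrt_integral_sq_mul_pow_le hL hd (M := C * ((θ + φ) ^ (-γ) /
    (θ + φ) ^ (2 * α + 1) * ((2 * π - θ - φ) ^ (-γ) / (2 * π - θ - φ) ^ (2 * β + 1))))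
    (by positivity) fun t ht => ?_).trans ?_
  · rw [sq_abs, mul_assoc, ← hweight hr, ← hweight hs]
    exact hbound t ht θ hθ φ hφ
  · calc _ = 2 * C * ((θ + φ) ^ (-γ) * (2 * π - θ - φ) ^ (-γ)) / ((θ + φ) ^ (2 * α + 1) *
          (2 * π - θ - φ) ^ (2 * β + 1) * (2 * |θ - φ|)) := by
          field_simp
      _ ≤ (2 * C + 1) * ((θ + φ) ^ (-γ) * (2 * π - θ - φ) ^ (-γ)) /
          (jacobiMeasure α β (jacobiBall θ |θ - φ|)).toReal := by
          gcongr
          linarith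
      _ = _ := by rw [← mul_assoc]

/-- Lemma 4.8* (a). -/
theorem square_function_kernel_growth (α β : ℝ)
    (hα : -(1 / 2) ≤ α) (hβ : -(1 / 2) ≤ β) (hαβ : -1 < α + β)
    (M N K ε₁ τ γ : ℕ) (hMN : 0 < M + N)
    (hε₁ : ε₁ ≤ 2) (hτ : τ ≤ 1) (hγ : γ = τ ∨ γ = 2 * τ)
    (hcond : (ε₁ : ℤ) + (K : ℤ) + 2 * (τ : ℤ) - (γ : ℤ) ≤ (M : ℤ) + (N : ℤ)) :
    ∃ C : ℝ, 0 < C ∧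
      ∀ θ ∈ Ioo (0 : ℝ) π, ∀ φ ∈ Ioo (0 : ℝ) π, θ ≠ φ →
        Real.sqrt (∫ t in Ioi (0 : ℝ),
            (iteratedDeriv ε₁
                (fun θ' => iteratedDeriv K
                  (fun t' => Hker (α + τ) (β + τ) t' θ' φ) t) θ) ^ 2 *
              t ^ (2 * M + 2 * N - 1))
          ≤ C * (θ + φ) ^ (-(γ : ℝ)) * (2 * π - θ - φ) ^ (-(γ : ℝ)) /
              (jacobiMeasure α β (jacobiBall θ |θ - φ|)).toReal := by
  have hγτ : γ ≤ 2 * τ := by omega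
  obtain ⟨C, hC, hbound⟩ := square_function_kernel_growth_general (α := α) (β := β) (τ := τ)
    (γ := γ) (L := M + N) (K := K) (ε₁ := ε₁) hα hβ
    (hαβ.trans_le (le_add_of_nonneg_right (by positivity))) hMN.ne' γ.cast_nonneg
    (by exact_mod_cast hγτ) (by exact_mod_cast hcond)
  rw [← mul_add]
  exact ⟨C, hC, hbound⟩
end

section
/- Let α, β ≥ -1/2. There exists a constant C depending only on α and β such that for all t > 0 and all θ, ψ ∈ (0,π) with θ ≠ ψ: e^{t(α+β+1)/2} H_t^{α,β}(θ,ψ) ≤ C / μ_{α,β}^+(B(θ, |θ-ψ|)), and e^{t(α+β+1)/2} |∂_θ H_t^{α,β}(θ,ψ)| ≤ C / ( |θ-ψ| · μ_{α,β}^+(B(θ, |θ-ψ|)) ). -/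
open MeasureTheory Real Set

/-!
Elementary bounds on `sinh` and `cosh` give
`e^{t(α+β+1)/2} sinh (t/2) / (cosh (t/2) - 1 + q)^{α+β+2} ≲ q^{-(α+β+3/2)}` for `0 < q ≤ 2`,
uniformly in `t > 0`, so the growth estimate reduces to
`∬ q^{-(α+β+3/2)} dΠ_α dΠ_β ≲ 1 / μ_{α,β}^+(B(θ,|θ-φ|))`.

With `K = cos (θ/2) cos (φ/2)` and `S = sin (θ/2) sin (φ/2)`, the set `{q < x}` lies in the box
`1 - |u| < x / (1 - K)`, `1 - |v| < x / (1 - S)`, whose mass under `Π_α × Π_β` is at most a constant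
times `x^{α+β+1} / ((1 - K)^{α+1/2} (1 - S)^{β+1/2})`. Since `q ≥ q₀ := q(θ,φ,1,1)`, Cavalieri's
principle bounds the double integral by `q₀^{-1/2} (1 - K)^{-(α+1/2)} (1 - S)^{-(β+1/2)}`. The ball
measure is at most a constant times the reciprocal, because `|θ - φ|²`, `(sin (θ/2) + |θ - φ|)²` and
`(cos (θ/2) + |θ - φ|)²` are dominated by `q₀`, `1 - K` and `1 - S`.

Differentiating under the integral replaces `α+β+2` by `α+β+3` in the exponent and produces a
factor `∂_θ q`. Since `(∂_θ q)² ≤ q / 2` and `(θ - φ)² ≲ q`, the extra factor is at most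
`q / (cosh (t/2) - 1 + q) / |θ - φ| ≤ 1 / |θ - φ|` up to a constant, so the gradient estimate
follows from the same integral bound.
-/

theorem lintegral_Icc_rpow_sub_one {s T : ℝ} (hs : 0 < s) (hT : 0 ≤ T) :
    ∫⁻ y in Icc 0 T, ENNReal.ofReal (y ^ (s - 1)) = ENNReal.ofReal (T ^ s / s) := by
  have hint : IntegrableOn (fun y : ℝ => y ^ (s - 1)) (Ioc 0 T) :=
    (intervalIntegrable_iff_integrableOn_Ioc_of_le hT).1
      (intervalIntegral.intervalIntegrable_rpow' (by linarith))
  have hnonneg : 0 ≤ᵐ[volume.restrict (Ioc 0 T)] fun y : ℝ => y ^ (s - 1) := by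
    filter_upwards [ae_restrict_mem measurableSet_Ioc] with y hy using rpow_nonneg hy.1.le _
  rw [setLIntegral_congr Ioc_ae_eq_Icc.symm, ← ofReal_integral_eq_lintegral_ofReal hint hnonneg,
    ← intervalIntegral.integral_of_le hT, integral_rpow (Or.inl (by linarith)), sub_add_cancel,
    zero_rpow hs.ne', sub_zero]

/- Cavalieri's principle: the level sets above `T` are null, and below `T` the weak-type bound is
integrated against `p * t ^ (p - 1)`. -/
theorem lintegral_rpow_le_of_meas_lt_le {X : Type*} [MeasurableSpace X] {μ : Measure X}
    {g : X → ℝ} {p b T : ℝ} {A : ENNReal} (hp : 0 < p) (hbp : b < p) (hT : 0 ≤ T)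
    (hg : AEMeasurable g μ) (hg_nonneg : 0 ≤ᵐ[μ] g) (hg_le : ∀ᵐ x ∂μ, g x ≤ T)
    (hA : ∀ t, 0 < t → μ {x | t < g x} ≤ A * ENNReal.ofReal (t ^ (-b))) :
    ∫⁻ x, ENNReal.ofReal (g x ^ p) ∂μ ≤ ENNReal.ofReal (p / (p - b) * T ^ (p - b)) * A := by
  have level (t : ℝ) (ht : 0 < t) : μ {x | t < g x} * ENNReal.ofReal (t ^ (p - 1)) ≤
      (Icc 0 T).indicator (fun y => A * ENNReal.ofReal (y ^ (p - b - 1))) t := by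
    rcases le_or_gt t T with htT | hTt
    · rw [indicator_of_mem (show t ∈ Icc 0 T from ⟨ht.le, htT⟩)]
      calc μ {x | t < g x} * ENNReal.ofReal (t ^ (p - 1))
          ≤ A * ENNReal.ofReal (t ^ (-b)) * ENNReal.ofReal (t ^ (p - 1)) := by
            gcongr
            exact hA t ht
        _ = A * ENNReal.ofReal (t ^ (p - b - 1)) := by
            rw [mul_assoc, ← ENNReal.ofReal_mul (by positivity), ← rpow_add ht]
            ring_nf
    · have hnull : μ {x | t < g x} = 0 := by
        rw [← compl_mem_ae_iff]
        filter_upwards [hg_le] with x hx using not_lt.2 (hx.trans hTt.le)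
      simp [hnull]
  rw [lintegral_rpow_eq_lintegral_meas_lt_mul μ hg_nonneg hg hp]
  calc ENNReal.ofReal p * ∫⁻ t in Ioi 0, μ {x | t < g x} * ENNReal.ofReal (t ^ (p - 1))
      ≤ ENNReal.ofReal p *
          ∫⁻ t, (Icc 0 T).indicator (fun y => A * ENNReal.ofReal (y ^ (p - b - 1))) t := by
        gcongr ENNReal.ofReal p * ?_
        exact (setLIntegral_mono' measurableSet_Ioi level).trans (setLIntegral_le_lintegral _ _)
    _ = ENNReal.ofReal p * (A * ENNReal.ofReal (T ^ (p - b) / (p - b))) := by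
        rw [lintegral_indicator measurableSet_Icc, lintegral_const_mul _ (by fun_prop),
          lintegral_Icc_rpow_sub_one (sub_pos.2 hbp) hT]
    _ = ENNReal.ofReal (p / (p - b) * T ^ (p - b)) * A := by
        rw [mul_left_comm, ← ENNReal.ofReal_mul hp.le, mul_comm, mul_div_left_comm,
          mul_comm (T ^ (p - b))]

theorem one_sub_sq_rpow_le {b u : ℝ} (hb : 0 ≤ b) (hu : |u| ≤ 1) :
    (1 - u ^ 2) ^ (b - 1) ≤ 2 ^ b * (1 - |u|) ^ (b - 1) := by
  have hu' : 0 ≤ |u| := abs_nonneg u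
  calc (1 - u ^ 2) ^ (b - 1) = (1 + |u|) ^ (b - 1) * (1 - |u|) ^ (b - 1) := by
        rw [← mul_rpow (by linarith) (by linarith), ← sq_abs]
        ring_nf
    _ ≤ 2 ^ b * (1 - |u|) ^ (b - 1) := by
        gcongr
        calc (1 + |u|) ^ (b - 1) ≤ (1 + |u|) ^ b :=
              rpow_le_rpow_of_exponent_le (by linarith) (by linarith)
          _ ≤ 2 ^ b := by gcongr; linarith

theorem lintegral_comp_one_sub_abs_le {F : ℝ → ENNReal} (hF : Measurable F) :
    ∫⁻ u, F (1 - |u|) ≤ 2 * ∫⁻ y, F y := by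
  calc ∫⁻ u, F (1 - |u|) ≤ ∫⁻ u, (F (1 - u) + F (1 + u)) := by
        refine lintegral_mono fun u => ?_
        rcases abs_choice u with h | h <;> simp [h]
    _ = 2 * ∫⁻ y, F y := by
        rw [lintegral_add_left (by fun_prop), lintegral_sub_left_eq_self F 1,
          lintegral_add_left_eq_self F 1, two_mul]

theorem setLIntegral_one_sub_sq_rpow_le {b x : ℝ} (hb : 0 < b) (hx : 0 ≤ x) :
    ∫⁻ u in {u | 1 - |u| < x} ∩ Icc (-1) 1, ENNReal.ofReal ((1 - u ^ 2) ^ (b - 1)) ≤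
      ENNReal.ofReal (2 ^ (b + 1) / b * x ^ b) := by
  have hmeas : MeasurableSet ({u : ℝ | 1 - |u| < x} ∩ Icc (-1) 1) :=
    (measurableSet_lt (by fun_prop) (by fun_prop)).inter measurableSet_Icc
  let F : ℝ → ENNReal := (Icc 0 x).indicator fun y => ENNReal.ofReal (y ^ (b - 1))
  have hF : Measurable F := Measurable.indicator (by fun_prop) measurableSet_Icc
  have hle : ∀ u ∈ {u : ℝ | 1 - |u| < x} ∩ Icc (-1) 1,
      ENNReal.ofReal ((1 - u ^ 2) ^ (b - 1)) ≤ ENNReal.ofReal (2 ^ b) * F (1 - |u|) := by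
    rintro u ⟨hux, hu⟩
    have hu1 : |u| ≤ 1 := abs_le.2 hu
    have hmem : 1 - |u| ∈ Icc 0 x := ⟨by linarith, le_of_lt hux⟩
    simp only [F, indicator_of_mem hmem]
    rw [← ENNReal.ofReal_mul (by positivity)]
    exact ENNReal.ofReal_le_ofReal (one_sub_sq_rpow_le hb.le hu1)
  calc ∫⁻ u in {u | 1 - |u| < x} ∩ Icc (-1) 1, ENNReal.ofReal ((1 - u ^ 2) ^ (b - 1))
      ≤ ∫⁻ u, ENNReal.ofReal (2 ^ b) * F (1 - |u|) :=
        (setLIntegral_mono' hmeas hle).trans (setLIntegral_le_lintegral _ _)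
    _ ≤ ENNReal.ofReal (2 ^ b) * (2 * ∫⁻ y, F y) := by
        rw [lintegral_const_mul _ (by fun_prop)]
        gcongr
        exact lintegral_comp_one_sub_abs_le hF
    _ = ENNReal.ofReal (2 ^ b) * (2 * ENNReal.ofReal (x ^ b / b)) := by
        rw [lintegral_indicator measurableSet_Icc, lintegral_Icc_rpow_sub_one hb hx]
    _ = ENNReal.ofReal (2 ^ (b + 1) / b * x ^ b) := by
        rw [← ENNReal.ofReal_ofNat, ← ENNReal.ofReal_mul (by positivity),
          ← ENNReal.ofReal_mul (by positivity), rpow_add_one (by norm_num)]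
        ring_nf

/- `Π_α` behaves like an `(α + 1/2)`-dimensional measure near the endpoints `±1`; this is the only
quantitative information about `Π_α` that enters. -/
theorem PiMeasure_one_sub_abs_lt_le {α : ℝ} (hα : -(1 / 2) ≤ α) : ∃ M : ℝ, 0 < M ∧
    ∀ x, 0 < x → PiMeasure α {u | 1 - |u| < x} ≤ ENNReal.ofReal (M * x ^ (α + 1 / 2)) := by
  rcases hα.eq_or_lt with rfl | hα
  · refine ⟨1, one_pos, fun x hx => ?_⟩
    simp [PiMeasure, hx, ENNReal.inv_two_add_inv_two]
  · have hb : 0 < α + 1 / 2 := by linarith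
    set c := Gamma (α + 1) / (√π * Gamma (α + 1 / 2)) with hc
    have hc_pos : 0 < c :=
      div_pos (Gamma_pos_of_pos (by linarith)) (mul_pos (by positivity) (Gamma_pos_of_pos hb))
    refine ⟨c * (2 ^ (α + 1 / 2 + 1) / (α + 1 / 2)), by positivity, fun x hx => ?_⟩
    have hmeas : MeasurableSet {u : ℝ | 1 - |u| < x} :=
      measurableSet_lt (by fun_prop) (by fun_prop)
    rw [PiMeasure, if_neg hα.ne', withDensity_apply _ hmeas, Measure.restrict_restrict hmeas,
      ← hc, show α - 1 / 2 = α + 1 / 2 - 1 by ring]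
    simp_rw [ENNReal.ofReal_mul hc_pos.le]
    rw [lintegral_const_mul _ (by fun_prop), mul_assoc, ENNReal.ofReal_mul hc_pos.le]
    gcongr
    exact setLIntegral_one_sub_sq_rpow_le hb hx.le

theorem isFiniteMeasure_PiMeasure {α : ℝ} (hα : -(1 / 2) ≤ α) : IsFiniteMeasure (PiMeasure α) := by
  obtain ⟨M, -, hM⟩ := PiMeasure_one_sub_abs_lt_le hα
  have huniv : {u : ℝ | 1 - |u| < 2} = univ :=
    eq_univ_of_forall fun u => show 1 - |u| < 2 by linarith [abs_nonneg u]
  exact ⟨huniv ▸ (hM 2 two_pos).trans_lt ENNReal.ofReal_lt_top⟩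

theorem ae_PiMeasure_mem_Icc (α : ℝ) : ∀ᵐ u ∂(PiMeasure α), u ∈ Icc (-1 : ℝ) 1 := by
  unfold PiMeasure
  split_ifs
  · refine Measure.ae_smul_measure (ae_add_measure_iff.2 ⟨?_, ?_⟩) _ <;>
      exact (ae_dirac_iff measurableSet_Icc).2 (by norm_num)
  · exact (withDensity_absolutelyContinuous _ _).ae_le (ae_restrict_mem measurableSet_Icc)

theorem ae_prod_PiMeasure_mem_Icc (α : ℝ) {β : ℝ} (hβ : -(1 / 2) ≤ β) :
    ∀ᵐ z ∂(PiMeasure α).prod (PiMeasure β), z.1 ∈ Icc (-1 : ℝ) 1 ∧ z.2 ∈ Icc (-1 : ℝ) 1 := by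
  have := isFiniteMeasure_PiMeasure hβ
  refine (Measure.ae_prod_mem_iff_ae_ae_mem (measurableSet_Icc.prod measurableSet_Icc)).2 ?_
  filter_upwards [ae_PiMeasure_mem_Icc α] with u hu
  filter_upwards [ae_PiMeasure_mem_Icc β] with v hv using ⟨hu, hv⟩

section qfun

variable {θ φ u v : ℝ}

/-- The partial derivative `∂_θ q(θ,φ,u,v)`. -/
noncomputable def qfunDeriv (θ φ u v : ℝ) : ℝ :=
  (v * sin (θ / 2) * cos (φ / 2) - u * cos (θ / 2) * sin (φ / 2)) / 2

theorem hasDerivAt_qfun (θ φ u v : ℝ) :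
    HasDerivAt (fun θ' => qfun θ' φ u v) (qfunDeriv θ φ u v) θ := by
  have half : HasDerivAt (fun x : ℝ => x / 2) (1 / 2) θ := (hasDerivAt_id θ).div_const 2
  refine ((((half.sin.const_mul u).mul_const (sin (φ / 2))).const_sub 1).sub
    ((half.cos.const_mul v).mul_const (cos (φ / 2)))).congr_deriv ?_
  unfold qfunDeriv
  ring

/- For fixed `φ, u, v` the pair `(1 - q, -2 ∂_θ q)` is the vector `(v cos (φ/2), u sin (φ/2))`
rotated by the angle `-θ/2`, which has length at most `1`. -/
theorem one_sub_qfun_sq_add_qfunDeriv_sq_le (θ φ : ℝ) (hu : u ∈ Icc (-1) 1) (hv : v ∈ Icc (-1) 1) :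
    (1 - qfun θ φ u v) ^ 2 + (2 * qfunDeriv θ φ u v) ^ 2 ≤ 1 := by
  have hu_sq : u ^ 2 ≤ 1 := (sq_le_one_iff_abs_le_one u).2 (abs_le.2 hu)
  have hv_sq : v ^ 2 ≤ 1 := (sq_le_one_iff_abs_le_one v).2 (abs_le.2 hv)
  calc (1 - qfun θ φ u v) ^ 2 + (2 * qfunDeriv θ φ u v) ^ 2
      = (u ^ 2 * sin (φ / 2) ^ 2 + v ^ 2 * cos (φ / 2) ^ 2) *
          (sin (θ / 2) ^ 2 + cos (θ / 2) ^ 2) := by unfold qfun qfunDeriv; ring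
    _ ≤ (1 * sin (φ / 2) ^ 2 + 1 * cos (φ / 2) ^ 2) * (sin (θ / 2) ^ 2 + cos (θ / 2) ^ 2) := by
        gcongr
    _ = 1 := by simp

theorem qfun_mem_Icc (θ φ : ℝ) (hu : u ∈ Icc (-1) 1) (hv : v ∈ Icc (-1) 1) :
    qfun θ φ u v ∈ Icc 0 2 := by
  have hsq : (1 - qfun θ φ u v) ^ 2 ≤ 1 :=
    (le_add_of_nonneg_right (sq_nonneg _)).trans (one_sub_qfun_sq_add_qfunDeriv_sq_le θ φ hu hv)
  have habs := abs_le.1 ((sq_le_one_iff_abs_le_one _).1 hsq)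
  constructor <;> linarith [habs.1, habs.2]

theorem qfunDeriv_sq_le (θ φ : ℝ) (hu : u ∈ Icc (-1) 1) (hv : v ∈ Icc (-1) 1) :
    qfunDeriv θ φ u v ^ 2 ≤ qfun θ φ u v / 2 := by
  nlinarith [one_sub_qfun_sq_add_qfunDeriv_sq_le θ φ hu hv, sq_nonneg (qfun θ φ u v)]

theorem abs_qfunDeriv_le_one (θ φ : ℝ) (hu : u ∈ Icc (-1) 1) (hv : v ∈ Icc (-1) 1) :
    |qfunDeriv θ φ u v| ≤ 1 := by
  rw [← sq_le_one_iff_abs_le_one]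
  linarith [qfunDeriv_sq_le θ φ hu hv, (qfun_mem_Icc θ φ hu hv).2]

theorem sq_sub_le_qfun_one_one (h : |θ - φ| ≤ 2 * π) : (θ - φ) ^ 2 ≤ 20 * qfun θ φ 1 1 := by
  have hq : qfun θ φ 1 1 = 1 - cos ((θ - φ) / 2) := by
    rw [sub_div, cos_sub]
    unfold qfun
    ring
  have hcos : cos ((θ - φ) / 2) ≤ 1 - 2 / π ^ 2 * ((θ - φ) / 2) ^ 2 :=
    cos_le_one_sub_mul_cos_sq (by rw [abs_div, abs_two]; linarith)
  have hpi : 1 / 5 ≤ 2 / π ^ 2 := by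
    rw [div_le_div_iff₀ (by norm_num) (by positivity)]
    nlinarith [pi_lt_d2, pi_pos]
  rw [hq]
  nlinarith [mul_le_mul_of_nonneg_right hpi (sq_nonneg ((θ - φ) / 2))]

theorem sin_half_nonneg (hθ : θ ∈ Icc 0 π) : 0 ≤ sin (θ / 2) :=
  sin_nonneg_of_nonneg_of_le_pi (by linarith [hθ.1]) (by linarith [hθ.1, hθ.2])

theorem cos_half_nonneg (hθ : θ ∈ Icc 0 π) : 0 ≤ cos (θ / 2) :=
  cos_nonneg_of_mem_Icc ⟨by linarith [hθ.1, pi_pos], by linarith [hθ.2]⟩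

theorem qfun_one_one_le (hθ : θ ∈ Icc 0 π) (hφ : φ ∈ Icc 0 π) (hu : u ≤ 1) (hv : v ≤ 1) :
    qfun θ φ 1 1 ≤ qfun θ φ u v := by
  have hs : u * (sin (θ / 2) * sin (φ / 2)) ≤ 1 * (sin (θ / 2) * sin (φ / 2)) :=
    mul_le_mul_of_nonneg_right hu (mul_nonneg (sin_half_nonneg hθ) (sin_half_nonneg hφ))
  have hc : v * (cos (θ / 2) * cos (φ / 2)) ≤ 1 * (cos (θ / 2) * cos (φ / 2)) :=
    mul_le_mul_of_nonneg_right hv (mul_nonneg (cos_half_nonneg hθ) (cos_half_nonneg hφ))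
  unfold qfun
  linarith

theorem sq_sub_le_qfun (hθ : θ ∈ Icc 0 π) (hφ : φ ∈ Icc 0 π) (hu : u ≤ 1) (hv : v ≤ 1) :
    (θ - φ) ^ 2 ≤ 20 * qfun θ φ u v := by
  have hdist : |θ - φ| ≤ 2 * π := by
    rw [abs_le]
    constructor <;> linarith [hθ.1, hθ.2, hφ.1, hφ.2]
  linarith [sq_sub_le_qfun_one_one hdist, qfun_one_one_le hθ hφ hu hv]

theorem abs_sub_mul_abs_qfunDeriv_le (hθ : θ ∈ Icc 0 π) (hφ : φ ∈ Icc 0 π) (hu : u ∈ Icc (-1) 1)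
    (hv : v ∈ Icc (-1) 1) : |θ - φ| * |qfunDeriv θ φ u v| ≤ 4 * qfun θ φ u v := by
  have hq := (qfun_mem_Icc θ φ hu hv).1
  rw [← abs_mul]
  refine abs_le_of_sq_le_sq ?_ (by positivity)
  calc ((θ - φ) * qfunDeriv θ φ u v) ^ 2
      = (θ - φ) ^ 2 * qfunDeriv θ φ u v ^ 2 := mul_pow _ _ _
    _ ≤ 20 * qfun θ φ u v * (qfun θ φ u v / 2) :=
        mul_le_mul (sq_sub_le_qfun hθ hφ hu.2 hv.2) (qfunDeriv_sq_le θ φ hu hv) (sq_nonneg _)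
          (by positivity)
    _ ≤ (4 * qfun θ φ u v) ^ 2 := by nlinarith

theorem pi_sub_mem_Icc (hθ : θ ∈ Icc 0 π) : π - θ ∈ Icc 0 π :=
  ⟨sub_nonneg.2 hθ.2, sub_le_self π hθ.1⟩

theorem qfun_pi_sub_pi_sub (θ φ u v : ℝ) : qfun (π - θ) (π - φ) v u = qfun θ φ u v := by
  simp only [qfun, sub_div, sin_pi_div_two_sub, cos_pi_div_two_sub]
  ring

theorem one_sub_abs_mul_one_sub_cos_le_qfun (hθ : θ ∈ Icc 0 π) (hφ : φ ∈ Icc 0 π) (hv : v ≤ 1) :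
    (1 - |u|) * (1 - cos (θ / 2) * cos (φ / 2)) ≤ qfun θ φ u v := by
  have hs := mul_nonneg (sin_half_nonneg hθ) (sin_half_nonneg hφ)
  have hc := mul_nonneg (cos_half_nonneg hθ) (cos_half_nonneg hφ)
  calc (1 - |u|) * (1 - cos (θ / 2) * cos (φ / 2))
      = qfun θ φ |u| 1 - |u| * qfun θ φ 1 1 := by unfold qfun; ring
    _ ≤ qfun θ φ |u| 1 :=
        sub_le_self _ (mul_nonneg (abs_nonneg u) (qfun_mem_Icc θ φ (by simp) (by simp)).1)
    _ ≤ qfun θ φ u v := by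
        unfold qfun
        nlinarith [le_abs_self u]

theorem one_sub_abs_mul_one_sub_sin_le_qfun (hθ : θ ∈ Icc 0 π) (hφ : φ ∈ Icc 0 π) (hu : u ≤ 1) :
    (1 - |v|) * (1 - sin (θ / 2) * sin (φ / 2)) ≤ qfun θ φ u v := by
  have := one_sub_abs_mul_one_sub_cos_le_qfun (u := v) (pi_sub_mem_Icc hθ) (pi_sub_mem_Icc hφ) hu
  rwa [qfun_pi_sub_pi_sub, sub_div, sub_div, cos_pi_div_two_sub, cos_pi_div_two_sub] at this

end qfun

section Psi

variable {α β t s : ℝ}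

theorem Psi_denom_pos (ht : 0 < t) (hs : 0 ≤ s) : 0 < cosh (t / 2) - 1 + s := by
  linarith [one_lt_cosh.2 (show t / 2 ≠ 0 by positivity)]

theorem Psi_pos (ht : 0 < t) (hs : 0 ≤ s) : 0 < Psi α β t s :=
  div_pos (sinh_pos_iff.2 (by linarith)) (rpow_pos_of_pos (Psi_denom_pos ht hs) _)

theorem Psi_le_Psi_zero (hαβ : 0 ≤ α + β + 2) (ht : 0 < t) (hs : 0 ≤ s) :
    Psi α β t s ≤ Psi α β t 0 := by
  have hden := Psi_denom_pos ht le_rfl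
  have : 0 ≤ sinh (t / 2) := sinh_nonneg_iff.2 (by linarith)
  unfold Psi
  gcongr

theorem mul_Psi_add_one (ht : 0 < t) (hs : 0 ≤ s) :
    (cosh (t / 2) - 1 + s) * Psi α (β + 1) t s = Psi α β t s := by
  have hden := Psi_denom_pos ht hs
  unfold Psi
  rw [show α + (β + 1) + 2 = α + β + 2 + 1 by ring, rpow_add_one hden.ne']
  field_simp

theorem hasDerivAt_Psi (ht : 0 < t) (hs : 0 ≤ s) :
    HasDerivAt (Psi α β t) (-(α + β + 2) * Psi α (β + 1) t s) s := by
  have hden := Psi_denom_pos ht hs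
  have hpow : HasDerivAt (fun x => (cosh (t / 2) - 1 + x) ^ (α + β + 2))
      (1 * (α + β + 2) * (cosh (t / 2) - 1 + s) ^ (α + β + 2 - 1)) s :=
    ((hasDerivAt_id s).const_add (cosh (t / 2) - 1)).rpow_const (Or.inl hden.ne')
  refine ((hasDerivAt_const s (sinh (t / 2))).div hpow (rpow_pos_of_pos hden _).ne').congr_deriv ?_
  unfold Psi
  rw [show α + (β + 1) + 2 = α + β + 2 + 1 by ring, rpow_add_one hden.ne', rpow_sub_one hden.ne']
  field_simp
  ring

theorem exp_half_le (hs : 0 < s) (hs2 : s ≤ 2) :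
    exp (t / 2) ≤ 4 * (cosh (t / 2) - 1 + s) / s := by
  have hcosh : 1 ≤ cosh (t / 2) := one_le_cosh _
  rw [le_div_iff₀ hs]
  calc exp (t / 2) * s ≤ 2 * cosh (t / 2) * s := by
        gcongr
        linarith [cosh_add_sinh (t / 2), sinh_lt_cosh (t / 2)]
    _ ≤ 4 * (cosh (t / 2) - 1 + s) := by nlinarith

theorem sinh_half_le (hs : 0 < s) (hs2 : s ≤ 2) :
    sinh (t / 2) ≤ 4 * (cosh (t / 2) - 1 + s) / √s := by
  have hA : 0 ≤ cosh (t / 2) - 1 := sub_nonneg.2 (one_le_cosh _)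
  have hsinh : sinh (t / 2) ^ 2 = (cosh (t / 2) - 1) ^ 2 + 2 * (cosh (t / 2) - 1) := by
    linarith [cosh_sq (t / 2)]
  rw [le_div_iff₀ (sqrt_pos.2 hs)]
  refine (abs_le_of_sq_le_sq' ?_ (by positivity)).2
  rw [mul_pow, sq_sqrt hs.le, hsinh]
  generalize cosh (t / 2) - 1 = A at hA
  nlinarith [mul_nonneg hA hs.le, mul_nonneg (sq_nonneg A) (sub_nonneg.2 hs2)]

theorem exp_mul_Psi_le (hαβ : 0 ≤ α + β + 1) (ht : 0 < t) (hs : 0 < s) (hs2 : s ≤ 2) :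
    exp (t * (α + β + 1) / 2) * Psi α β t s ≤ 4 ^ (α + β + 2) * s ^ (-(α + β + 3 / 2)) := by
  set D := cosh (t / 2) - 1 + s
  have hD_pos : 0 < D := Psi_denom_pos ht hs.le
  have hexp : exp (t * (α + β + 1) / 2) ≤ (4 * D / s) ^ (α + β + 1) := by
    rw [mul_div_right_comm, exp_mul]
    gcongr
    exact exp_half_le hs hs2
  calc exp (t * (α + β + 1) / 2) * Psi α β t s
      ≤ (4 * D / s) ^ (α + β + 1) * (4 * D / √s / D ^ (α + β + 2)) := by
        unfold Psi
        gcongr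
        exact sinh_half_le hs hs2
    _ = 4 ^ (α + β + 2) * (s ^ (α + β + 1) * √s)⁻¹ := by
        rw [show α + β + 2 = α + β + 1 + 1 by ring, rpow_add_one hD_pos.ne',
          rpow_add_one four_ne_zero, div_rpow (by positivity) hs.le,
          mul_rpow zero_le_four hD_pos.le]
        field_simp
    _ = 4 ^ (α + β + 2) * s ^ (-(α + β + 3 / 2)) := by
        rw [sqrt_eq_rpow, ← rpow_add hs, ← rpow_neg hs.le]
        ring_nf

end Psi

section PiMeasure

variable {α β θ φ : ℝ}

/-- The factor `(1 - cos (θ/2) cos (φ/2))^(α+1/2) (1 - sin (θ/2) sin (φ/2))^(β+1/2)`. It is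
comparable to `μ_{α,β}^+(B(θ,|θ-φ|)) / |θ-φ|`, and it is the form in which the ball measure shows up
when `q` is integrated against `Π_α × Π_β`. -/
noncomputable def ballFactor (α β θ φ : ℝ) : ℝ :=
  (1 - cos (θ / 2) * cos (φ / 2)) ^ (α + 1 / 2) * (1 - sin (θ / 2) * sin (φ / 2)) ^ (β + 1 / 2)

theorem one_sub_cos_half_mul_cos_half_pos (hθ : θ ∈ Icc 0 π) (hφ : φ ∈ Icc 0 π)
    (hq : 0 < qfun θ φ 1 1) : 0 < 1 - cos (θ / 2) * cos (φ / 2) := by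
  have := mul_nonneg (sin_half_nonneg hθ) (sin_half_nonneg hφ)
  unfold qfun at hq
  linarith

theorem one_sub_sin_half_mul_sin_half_pos (hθ : θ ∈ Icc 0 π) (hφ : φ ∈ Icc 0 π)
    (hq : 0 < qfun θ φ 1 1) : 0 < 1 - sin (θ / 2) * sin (φ / 2) := by
  have := mul_nonneg (cos_half_nonneg hθ) (cos_half_nonneg hφ)
  unfold qfun at hq
  linarith

theorem ballFactor_pos (α β : ℝ) (hθ : θ ∈ Icc 0 π) (hφ : φ ∈ Icc 0 π) (hq : 0 < qfun θ φ 1 1) :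
    0 < ballFactor α β θ φ :=
  mul_pos (rpow_pos_of_pos (one_sub_cos_half_mul_cos_half_pos hθ hφ hq) _)
    (rpow_pos_of_pos (one_sub_sin_half_mul_sin_half_pos hθ hφ hq) _)

theorem prod_PiMeasure_qfun_lt_le (hα : -(1 / 2) ≤ α) (hβ : -(1 / 2) ≤ β) : ∃ M : ℝ, 0 < M ∧
    ∀ θ ∈ Icc 0 π, ∀ φ ∈ Icc 0 π, 0 < qfun θ φ 1 1 → ∀ x, 0 < x →
      (PiMeasure α).prod (PiMeasure β) {z | qfun θ φ z.1 z.2 < x} ≤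
        ENNReal.ofReal (M / ballFactor α β θ φ * x ^ (α + β + 1)) := by
  obtain ⟨M₁, hM₁, growth₁⟩ := PiMeasure_one_sub_abs_lt_le hα
  obtain ⟨M₂, hM₂, growth₂⟩ := PiMeasure_one_sub_abs_lt_le hβ
  have := isFiniteMeasure_PiMeasure hβ
  refine ⟨M₁ * M₂, by positivity, fun θ hθ φ hφ hq x hx => ?_⟩
  have hK := one_sub_cos_half_mul_cos_half_pos hθ hφ hq
  have hS := one_sub_sin_half_mul_sin_half_pos hθ hφ hq
  unfold ballFactor
  set K := 1 - cos (θ / 2) * cos (φ / 2)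
  set S := 1 - sin (θ / 2) * sin (φ / 2)
  have hsub : ({z | qfun θ φ z.1 z.2 < x} : Set (ℝ × ℝ)) ≤ᵐ[(PiMeasure α).prod (PiMeasure β)]
      {u | 1 - |u| < x / K} ×ˢ {v | 1 - |v| < x / S} := by
    filter_upwards [ae_prod_PiMeasure_mem_Icc α hβ] with z ⟨hu, hv⟩ (hz : qfun θ φ z.1 z.2 < x)
    exact ⟨(lt_div_iff₀ hK).2
        ((one_sub_abs_mul_one_sub_cos_le_qfun hθ hφ hv.2).trans_lt hz),
      (lt_div_iff₀ hS).2 ((one_sub_abs_mul_one_sub_sin_le_qfun hθ hφ hu.2).trans_lt hz)⟩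
  calc (PiMeasure α).prod (PiMeasure β) {z | qfun θ φ z.1 z.2 < x}
      ≤ PiMeasure α {u | 1 - |u| < x / K} * PiMeasure β {v | 1 - |v| < x / S} :=
        (measure_mono_ae hsub).trans_eq (Measure.prod_prod _ _)
    _ ≤ ENNReal.ofReal (M₁ * (x / K) ^ (α + 1 / 2)) *
          ENNReal.ofReal (M₂ * (x / S) ^ (β + 1 / 2)) := by
        gcongr
        exacts [growth₁ _ (by positivity), growth₂ _ (by positivity)]
    _ = ENNReal.ofReal (M₁ * M₂ / (K ^ (α + 1 / 2) * S ^ (β + 1 / 2)) * x ^ (α + β + 1)) := by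
        rw [← ENNReal.ofReal_mul (by positivity), div_rpow hx.le hK.le, div_rpow hx.le hS.le,
          show α + β + 1 = α + 1 / 2 + (β + 1 / 2) by ring, rpow_add hx (α + 1 / 2)]
        congr 1
        ring

theorem continuous_qfun (θ φ : ℝ) : Continuous fun z : ℝ × ℝ => qfun θ φ z.1 z.2 := by
  unfold qfun
  fun_prop

theorem lintegral_qfun_rpow_neg_le (hα : -(1 / 2) ≤ α) (hβ : -(1 / 2) ≤ β) {p : ℝ}
    (hp : α + β + 1 < p) : ∃ M : ℝ, 0 < M ∧
      ∀ θ ∈ Icc 0 π, ∀ φ ∈ Icc 0 π, 0 < qfun θ φ 1 1 →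
        ∫⁻ z, ENNReal.ofReal (qfun θ φ z.1 z.2 ^ (-p)) ∂(PiMeasure α).prod (PiMeasure β) ≤
          ENNReal.ofReal (M / (qfun θ φ 1 1 ^ (p - (α + β + 1)) * ballFactor α β θ φ)) := by
  obtain ⟨M, hM, small⟩ := prod_PiMeasure_qfun_lt_le hα hβ
  have hp_pos : 0 < p := by linarith
  refine ⟨p / (p - (α + β + 1)) * M, mul_pos (div_pos hp_pos (by linarith)) hM,
    fun θ hθ φ hφ hq => ?_⟩
  have hw := ballFactor_pos α β hθ hφ hq
  have hq_le : ∀ᵐ z ∂(PiMeasure α).prod (PiMeasure β), qfun θ φ 1 1 ≤ qfun θ φ z.1 z.2 := by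
    filter_upwards [ae_prod_PiMeasure_mem_Icc α hβ] with z hz
      using qfun_one_one_le hθ hφ hz.1.2 hz.2.2
  have level (t : ℝ) (ht : 0 < t) :
      (PiMeasure α).prod (PiMeasure β) {z | t < (qfun θ φ z.1 z.2)⁻¹} ≤
        ENNReal.ofReal (M / ballFactor α β θ φ) *
            ENNReal.ofReal (t ^ (-(α + β + 1))) := by
    rw [rpow_neg ht.le, ← inv_rpow ht.le, ← ENNReal.ofReal_mul' (by positivity)]
    refine (measure_mono_ae ?_).trans (small θ hθ φ hφ hq t⁻¹ (inv_pos.2 ht))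
    filter_upwards [hq_le] with z hz (htz : t < (qfun θ φ z.1 z.2)⁻¹)
    exact (lt_inv_comm₀ ht (hq.trans_le hz)).1 htz
  calc ∫⁻ z, ENNReal.ofReal (qfun θ φ z.1 z.2 ^ (-p)) ∂(PiMeasure α).prod (PiMeasure β)
      = ∫⁻ z, ENNReal.ofReal ((qfun θ φ z.1 z.2)⁻¹ ^ p) ∂(PiMeasure α).prod (PiMeasure β) := by
        refine lintegral_congr_ae ?_
        filter_upwards [hq_le] with z hz
        rw [inv_rpow (hq.le.trans hz), rpow_neg (hq.le.trans hz)]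
    _ ≤ _ := lintegral_rpow_le_of_meas_lt_le hp_pos hp (inv_nonneg.2 hq.le)
        (continuous_qfun θ φ).measurable.inv.aemeasurable
        (by filter_upwards [hq_le] with z hz using inv_nonneg.2 (hq.le.trans hz))
        (by filter_upwards [hq_le] with z hz using inv_anti₀ hq hz) level
    _ = _ := by
        rw [← ENNReal.ofReal_mul' (div_pos hM hw).le, inv_rpow hq.le]
        congr 1
        field_simp

end PiMeasure

section jacobiMeasure

variable {α β θ φ r : ℝ}

theorem measurableSet_jacobiBall (θ r : ℝ) : MeasurableSet (jacobiBall θ r) :=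
  measurableSet_Ioo.inter measurableSet_Ioo

theorem jacobiMeasure_jacobiBall (α β θ r : ℝ) :
    jacobiMeasure α β (jacobiBall θ r) = ∫⁻ φ in jacobiBall θ r,
      ENNReal.ofReal (sin (φ / 2) ^ (2 * α + 1) * cos (φ / 2) ^ (2 * β + 1)) := by
  have hm := measurableSet_jacobiBall θ r
  rw [jacobiMeasure, withDensity_apply _ hm, Measure.restrict_restrict hm,
    inter_eq_self_of_subset_left (show jacobiBall θ r ⊆ Ioo 0 π from inter_subset_right)]

theorem jacobiMeasure_jacobiBall_pos (α β : ℝ) (hθ : θ ∈ Ioo 0 π) (hr : 0 < r) :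
    0 < jacobiMeasure α β (jacobiBall θ r) := by
  rw [jacobiMeasure_jacobiBall, setLIntegral_pos_iff (by fun_prop)]
  have hsupport : jacobiBall θ r ⊆ Function.support fun φ =>
      ENNReal.ofReal (sin (φ / 2) ^ (2 * α + 1) * cos (φ / 2) ^ (2 * β + 1)) := by
    rintro φ ⟨-, hφ⟩
    have hsin : 0 < sin (φ / 2) :=
      sin_pos_of_pos_of_lt_pi (by linarith [hφ.1]) (by linarith [hφ.1, hφ.2])
    have hcos : 0 < cos (φ / 2) :=
      cos_pos_of_mem_Ioo ⟨by linarith [hφ.1, pi_pos], by linarith [hφ.2]⟩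
    exact (ENNReal.ofReal_pos.2 (by positivity)).ne'
  rw [inter_eq_self_of_subset_right hsupport]
  exact (isOpen_Ioo.inter isOpen_Ioo).measure_pos _
    ⟨θ, ⟨sub_lt_self θ hr, lt_add_of_pos_right θ hr⟩, hθ⟩

theorem jacobiMeasure_jacobiBall_le (hα : -(1 / 2) ≤ α) (hβ : -(1 / 2) ≤ β) (hθ : θ ∈ Icc 0 π)
    (hr : 0 ≤ r) : jacobiMeasure α β (jacobiBall θ r) ≤ ENNReal.ofReal
      (2 * r * ((sin (θ / 2) + r) ^ (2 * α + 1) * (cos (θ / 2) + r) ^ (2 * β + 1))) := by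
  have hsin := sin_half_nonneg hθ
  have hcos := cos_half_nonneg hθ
  have hα' : 0 ≤ 2 * α + 1 := by linarith
  have hβ' : 0 ≤ 2 * β + 1 := by linarith
  have density_le (φ : ℝ) (hφ : φ ∈ jacobiBall θ r) :
      ENNReal.ofReal (sin (φ / 2) ^ (2 * α + 1) * cos (φ / 2) ^ (2 * β + 1)) ≤
        ENNReal.ofReal ((sin (θ / 2) + r) ^ (2 * α + 1) * (cos (θ / 2) + r) ^ (2 * β + 1)) := by
    obtain ⟨⟨hl, hr'⟩, hφ⟩ := hφ
    have hφ := Ioo_subset_Icc_self hφ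
    have := sin_half_nonneg hφ
    have := cos_half_nonneg hφ
    have hdist : |φ / 2 - θ / 2| ≤ r := abs_le.2 ⟨by linarith, by linarith⟩
    have hsin_le : sin (φ / 2) ≤ sin (θ / 2) + r := by
      linarith [le_of_abs_le ((abs_sin_sub_sin_le (φ / 2) (θ / 2)).trans hdist)]
    have hcos_le : cos (φ / 2) ≤ cos (θ / 2) + r := by
      linarith [le_of_abs_le ((abs_cos_sub_cos_le (φ / 2) (θ / 2)).trans hdist)]
    gcongr
  have volume_le : volume (jacobiBall θ r) ≤ ENNReal.ofReal (2 * r) := by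
    refine (measure_mono inter_subset_left).trans_eq ?_
    rw [volume_Ioo]
    ring_nf
  calc jacobiMeasure α β (jacobiBall θ r)
      ≤ ENNReal.ofReal ((sin (θ / 2) + r) ^ (2 * α + 1) * (cos (θ / 2) + r) ^ (2 * β + 1)) *
          volume (jacobiBall θ r) := by
        rw [jacobiMeasure_jacobiBall, ← setLIntegral_const]
        exact setLIntegral_mono' (measurableSet_jacobiBall θ r) density_le
    _ ≤ ENNReal.ofReal ((sin (θ / 2) + r) ^ (2 * α + 1) * (cos (θ / 2) + r) ^ (2 * β + 1)) *
          ENNReal.ofReal (2 * r) := by gcongr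
    _ = _ := by rw [← ENNReal.ofReal_mul (by positivity), mul_comm]

theorem sin_half_add_sq_le (hθ : θ ∈ Icc 0 π) (hφ : φ ∈ Icc 0 π) :
    (sin (θ / 2) + |θ - φ|) ^ 2 ≤ 44 * (1 - cos (θ / 2) * cos (φ / 2)) := by
  have hdist := sq_sub_le_qfun hθ hφ (le_refl 1) (le_refl 1)
  have hs := mul_nonneg (sin_half_nonneg hθ) (sin_half_nonneg hφ)
  have hq : qfun θ φ 1 1 ≤ 1 - cos (θ / 2) * cos (φ / 2) := by
    unfold qfun
    linarith
  have hsin : sin (θ / 2) ^ 2 ≤ 2 * (1 - cos (θ / 2) * cos (φ / 2)) := by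
    nlinarith [sin_sq_add_cos_sq (θ / 2), sq_nonneg (cos (θ / 2) - cos (φ / 2)),
      sin_sq_add_cos_sq (φ / 2), sq_nonneg (sin (φ / 2))]
  calc (sin (θ / 2) + |θ - φ|) ^ 2 ≤ 2 * (sin (θ / 2) ^ 2 + |θ - φ| ^ 2) := add_sq_le
    _ ≤ 44 * (1 - cos (θ / 2) * cos (φ / 2)) := by
        rw [sq_abs]
        linarith

theorem cos_half_add_sq_le (hθ : θ ∈ Icc 0 π) (hφ : φ ∈ Icc 0 π) :
    (cos (θ / 2) + |θ - φ|) ^ 2 ≤ 44 * (1 - sin (θ / 2) * sin (φ / 2)) := by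
  have := sin_half_add_sq_le (pi_sub_mem_Icc hθ) (pi_sub_mem_Icc hφ)
  rwa [sub_div, sub_div, sin_pi_div_two_sub, cos_pi_div_two_sub, cos_pi_div_two_sub,
    sub_sub_sub_cancel_left, abs_sub_comm] at this

theorem rpow_two_mul_le_of_sq_le {c x y z : ℝ} (hc : 0 ≤ c) (hx : 0 ≤ x) (hy : 0 ≤ y) (hz : 0 ≤ z)
    (h : x ^ 2 ≤ c * y) : x ^ (2 * z) ≤ c ^ z * y ^ z := by
  rw [← mul_rpow hc hy, ← Nat.cast_two, rpow_natCast_mul hx]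
  gcongr

theorem jacobiMeasure_jacobiBall_le_ballFactor (hα : -(1 / 2) ≤ α) (hβ : -(1 / 2) ≤ β)
    (hθ : θ ∈ Icc 0 π) (hφ : φ ∈ Icc 0 π) (hq : 0 < qfun θ φ 1 1) :
    jacobiMeasure α β (jacobiBall θ |θ - φ|) ≤ ENNReal.ofReal
      (2 * 44 ^ (α + β + 3 / 2) * (qfun θ φ 1 1 ^ (1 / 2 : ℝ) * ballFactor α β θ φ)) := by
  have hsin := sin_half_nonneg hθ
  have hcos := cos_half_nonneg hθ
  have hK := one_sub_cos_half_mul_cos_half_pos hθ hφ hq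
  have hS := one_sub_sin_half_mul_sin_half_pos hθ hφ hq
  have hr : |θ - φ| ≤ 44 ^ (1 / 2 : ℝ) * qfun θ φ 1 1 ^ (1 / 2 : ℝ) := by
    have hsq : |θ - φ| ^ 2 ≤ 44 * qfun θ φ 1 1 := by
      rw [sq_abs]
      linarith [sq_sub_le_qfun hθ hφ (le_refl 1) (le_refl 1)]
    have := rpow_two_mul_le_of_sq_le (by norm_num) (abs_nonneg _) hq.le one_half_pos.le hsq
    rwa [mul_one_div_cancel two_ne_zero, rpow_one] at this
  have hsin_le := rpow_two_mul_le_of_sq_le (z := α + 1 / 2) (by norm_num) (by positivity) hK.le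
    (by linarith) (sin_half_add_sq_le hθ hφ)
  have hcos_le := rpow_two_mul_le_of_sq_le (z := β + 1 / 2) (by norm_num) (by positivity) hS.le
    (by linarith) (cos_half_add_sq_le hθ hφ)
  refine (jacobiMeasure_jacobiBall_le hα hβ hθ (abs_nonneg _)).trans (ENNReal.ofReal_le_ofReal ?_)
  rw [show 2 * α + 1 = 2 * (α + 1 / 2) by ring, show 2 * β + 1 = 2 * (β + 1 / 2) by ring]
  set K := 1 - cos (θ / 2) * cos (φ / 2)
  set S := 1 - sin (θ / 2) * sin (φ / 2)
  calc 2 * |θ - φ| * ((sin (θ / 2) + |θ - φ|) ^ (2 * (α + 1 / 2)) *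
          (cos (θ / 2) + |θ - φ|) ^ (2 * (β + 1 / 2)))
      ≤ 2 * (44 ^ (1 / 2 : ℝ) * qfun θ φ 1 1 ^ (1 / 2 : ℝ)) *
          (44 ^ (α + 1 / 2) * K ^ (α + 1 / 2) * (44 ^ (β + 1 / 2) * S ^ (β + 1 / 2))) := by gcongr
    _ = 2 * 44 ^ (α + β + 3 / 2) * (qfun θ φ 1 1 ^ (1 / 2 : ℝ) * ballFactor α β θ φ) := by
        rw [show α + β + 3 / 2 = 1 / 2 + (α + 1 / 2) + (β + 1 / 2) by ring,
          rpow_add (by norm_num) (1 / 2 + (α + 1 / 2)), rpow_add (by norm_num) (1 / 2), ballFactor]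
        ring

theorem qfun_one_one_pos (hθ : θ ∈ Icc 0 π) (hφ : φ ∈ Icc 0 π) (hne : θ ≠ φ) :
    0 < qfun θ φ 1 1 := by
  have := sq_sub_le_qfun hθ hφ (le_refl 1) (le_refl 1)
  have := sq_pos_of_ne_zero (sub_ne_zero.2 hne)
  linarith

theorem lintegral_qfun_rpow_neg_le_jacobiBall (hα : -(1 / 2) ≤ α) (hβ : -(1 / 2) ≤ β) :
    ∃ C : ℝ, 0 < C ∧ ∀ θ ∈ Ioo 0 π, ∀ φ ∈ Ioo 0 π, θ ≠ φ →
      ∫⁻ z, ENNReal.ofReal (qfun θ φ z.1 z.2 ^ (-(α + β + 3 / 2)))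
          ∂(PiMeasure α).prod (PiMeasure β) ≤
        ENNReal.ofReal (C / (jacobiMeasure α β (jacobiBall θ |θ - φ|)).toReal) := by
  obtain ⟨M, hM, hle⟩ :=
    lintegral_qfun_rpow_neg_le hα hβ (p := α + β + 3 / 2) (by linarith)
  refine ⟨2 * 44 ^ (α + β + 3 / 2) * M, by positivity, fun θ hθ φ hφ hne => ?_⟩
  have hθ' := Ioo_subset_Icc_self hθ
  have hφ' := Ioo_subset_Icc_self hφ
  have hq := qfun_one_one_pos hθ' hφ' hne
  have hball := jacobiMeasure_jacobiBall_le_ballFactor hα hβ hθ' hφ' hq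
  have hball_pos : 0 < (jacobiMeasure α β (jacobiBall θ |θ - φ|)).toReal :=
    ENNReal.toReal_pos (jacobiMeasure_jacobiBall_pos α β hθ (abs_pos.2 (sub_ne_zero.2 hne))).ne'
      (hball.trans_lt ENNReal.ofReal_lt_top).ne
  have hw := ballFactor_pos α β hθ' hφ' hq
  refine (hle θ hθ' φ hφ' hq).trans (ENNReal.ofReal_le_ofReal ?_)
  rw [show α + β + 3 / 2 - (α + β + 1) = 1 / 2 by ring, div_le_div_iff₀ (by positivity) hball_pos]
  calc M * (jacobiMeasure α β (jacobiBall θ |θ - φ|)).toReal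
      ≤ M * (2 * 44 ^ (α + β + 3 / 2) * (qfun θ φ 1 1 ^ (1 / 2 : ℝ) * ballFactor α β θ φ)) := by
        gcongr
        exact ENNReal.toReal_le_of_le_ofReal (by positivity) hball
    _ = _ := by ring

end jacobiMeasure

section Hker

variable {α β t θ φ : ℝ}

theorem exp_mul_abs_integral_le (hα : -(1 / 2) ≤ α) (hβ : -(1 / 2) ≤ β) (ht : 0 < t)
    (hθ : θ ∈ Icc 0 π) (hφ : φ ∈ Icc 0 π) (hne : θ ≠ φ) {F : ℝ × ℝ → ℝ} {M B : ℝ} (hM : 0 ≤ M)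
    (hB : 0 ≤ B)
    (hF : ∀ᵐ z ∂(PiMeasure α).prod (PiMeasure β), |F z| ≤ M * Psi α β t (qfun θ φ z.1 z.2))
    (hq : ∫⁻ z, ENNReal.ofReal (qfun θ φ z.1 z.2 ^ (-(α + β + 3 / 2)))
        ∂(PiMeasure α).prod (PiMeasure β) ≤ ENNReal.ofReal B) :
    exp (t * (α + β + 1) / 2) * |∫ z, F z ∂(PiMeasure α).prod (PiMeasure β)| ≤
      M * 4 ^ (α + β + 2) * B := by
  set E := exp (t * (α + β + 1) / 2)
  have pointwise : ∀ᵐ z ∂(PiMeasure α).prod (PiMeasure β), ENNReal.ofReal ‖E * F z‖ ≤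
      ENNReal.ofReal (M * 4 ^ (α + β + 2)) *
        ENNReal.ofReal (qfun θ φ z.1 z.2 ^ (-(α + β + 3 / 2))) := by
    filter_upwards [hF, ae_prod_PiMeasure_mem_Icc α hβ] with z hz ⟨hu, hv⟩
    have hq_pos := (qfun_one_one_pos hθ hφ hne).trans_le (qfun_one_one_le hθ hφ hu.2 hv.2)
    rw [← ENNReal.ofReal_mul (by positivity)]
    refine ENNReal.ofReal_le_ofReal ?_
    calc ‖E * F z‖ = E * |F z| := by rw [norm_mul, norm_eq_abs, norm_eq_abs, abs_exp]
      _ ≤ E * (M * Psi α β t (qfun θ φ z.1 z.2)) := by gcongr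
      _ = M * (E * Psi α β t (qfun θ φ z.1 z.2)) := mul_left_comm _ _ _
      _ ≤ M * (4 ^ (α + β + 2) * qfun θ φ z.1 z.2 ^ (-(α + β + 3 / 2))) := by
          gcongr M * ?_
          exact exp_mul_Psi_le (by linarith) ht hq_pos (qfun_mem_Icc θ φ hu hv).2
      _ = _ := (mul_assoc _ _ _).symm
  calc E * |∫ z, F z ∂(PiMeasure α).prod (PiMeasure β)|
      = ‖∫ z, E * F z ∂(PiMeasure α).prod (PiMeasure β)‖ := by
        rw [integral_const_mul, norm_mul, norm_eq_abs, norm_eq_abs, abs_exp]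
    _ ≤ (∫⁻ z, ENNReal.ofReal ‖E * F z‖ ∂(PiMeasure α).prod (PiMeasure β)).toReal :=
        norm_integral_le_lintegral_norm _
    _ ≤ M * 4 ^ (α + β + 2) * B := by
        refine ENNReal.toReal_le_of_le_ofReal (by positivity)
          ((lintegral_mono_ae pointwise).trans ?_)
        rw [lintegral_const_mul' _ _ ENNReal.ofReal_ne_top, ENNReal.ofReal_mul' hB]
        exact mul_le_mul_right hq _

theorem exp_mul_abs_integral_le_div_jacobiMeasure (hα : -(1 / 2) ≤ α) (hβ : -(1 / 2) ≤ β) :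
    ∃ C : ℝ, ∀ t, 0 < t → ∀ θ ∈ Ioo 0 π, ∀ φ ∈ Ioo 0 π, θ ≠ φ → ∀ (F : ℝ × ℝ → ℝ) (M : ℝ), 0 ≤ M →
      (∀ᵐ z ∂(PiMeasure α).prod (PiMeasure β), |F z| ≤ M * Psi α β t (qfun θ φ z.1 z.2)) →
        exp (t * (α + β + 1) / 2) * |∫ z, F z ∂(PiMeasure α).prod (PiMeasure β)| ≤
          M * C / (jacobiMeasure α β (jacobiBall θ |θ - φ|)).toReal := by
  obtain ⟨C, hC, hle⟩ := lintegral_qfun_rpow_neg_le_jacobiBall hα hβ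
  refine ⟨4 ^ (α + β + 2) * C, fun t ht θ hθ φ hφ hne F M hM hF => ?_⟩
  rw [← mul_assoc, mul_div_assoc (M * _)]
  exact exp_mul_abs_integral_le hα hβ ht (Ioo_subset_Icc_self hθ) (Ioo_subset_Icc_self hφ) hne hM
    (by positivity) hF (hle θ hθ φ hφ hne)

/-- The normalising constant `c_{α,β}` of the Jacobi-Poisson kernel. -/
noncomputable def jacobiConst (α β : ℝ) : ℝ :=
  2 ^ (-(α + β + 2)) / (jacobiMeasure α β (Ioo 0 π)).toReal

theorem jacobiConst_nonneg (α β : ℝ) : 0 ≤ jacobiConst α β := by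
  unfold jacobiConst
  positivity

theorem measurable_Psi_qfun (α β t θ φ : ℝ) :
    Measurable fun z : ℝ × ℝ => Psi α β t (qfun θ φ z.1 z.2) := by
  have hΨ : Measurable (Psi α β t) := by
    unfold Psi
    fun_prop
  exact hΨ.comp (continuous_qfun θ φ).measurable

theorem integrable_Psi_qfun (hα : -(1 / 2) ≤ α) (hβ : -(1 / 2) ≤ β) (ht : 0 < t) (θ φ : ℝ) :
    Integrable (fun z => Psi α β t (qfun θ φ z.1 z.2)) ((PiMeasure α).prod (PiMeasure β)) := by
  have := isFiniteMeasure_PiMeasure hα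
  have := isFiniteMeasure_PiMeasure hβ
  refine .of_bound (measurable_Psi_qfun ..).aestronglyMeasurable (Psi α β t 0) ?_
  filter_upwards [ae_prod_PiMeasure_mem_Icc α hβ] with z ⟨hu, hv⟩
  have hq := (qfun_mem_Icc θ φ hu hv).1
  rw [norm_eq_abs, abs_of_pos (Psi_pos ht hq)]
  exact Psi_le_Psi_zero (by linarith) ht hq

theorem Hker_eq_integral (hα : -(1 / 2) ≤ α) (hβ : -(1 / 2) ≤ β) (ht : 0 < t) (θ φ : ℝ) :
    Hker α β t θ φ = jacobiConst α β *
      ∫ z, Psi α β t (qfun θ φ z.1 z.2) ∂(PiMeasure α).prod (PiMeasure β) := by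
  have := isFiniteMeasure_PiMeasure hα
  have := isFiniteMeasure_PiMeasure hβ
  rw [integral_prod _ (integrable_Psi_qfun hα hβ ht θ φ), Hker, mul_assoc, ← integral_const_mul]
  simp only [← integral_const_mul, mul_one_div]
  rfl

theorem hasDerivAt_Hker (hα : -(1 / 2) ≤ α) (hβ : -(1 / 2) ≤ β) (ht : 0 < t) (θ φ : ℝ) :
    HasDerivAt (fun θ' => Hker α β t θ' φ)
      (jacobiConst α β * ∫ z, -(α + β + 2) * Psi α (β + 1) t (qfun θ φ z.1 z.2) *
        qfunDeriv θ φ z.1 z.2 ∂(PiMeasure α).prod (PiMeasure β)) θ := by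
  have := isFiniteMeasure_PiMeasure hα
  have := isFiniteMeasure_PiMeasure hβ
  simp only [Hker_eq_integral hα hβ ht]
  refine (hasDerivAt_integral_of_dominated_loc_of_deriv_le Filter.univ_mem
    (bound := fun _ => (α + β + 2) * Psi α (β + 1) t 0)
    (F' := fun x z => -(α + β + 2) * Psi α (β + 1) t (qfun x φ z.1 z.2) * qfunDeriv x φ z.1 z.2)
    (.of_forall fun x => (measurable_Psi_qfun α β t x φ).aestronglyMeasurable)
    (integrable_Psi_qfun hα hβ ht θ φ) ?_ ?_ (integrable_const _) ?_).2.const_mul _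
  · have hderiv : Continuous fun z : ℝ × ℝ => qfunDeriv θ φ z.1 z.2 := by
      unfold qfunDeriv
      fun_prop
    exact (((measurable_Psi_qfun ..).const_mul _).mul hderiv.measurable).aestronglyMeasurable
  · filter_upwards [ae_prod_PiMeasure_mem_Icc α hβ] with z ⟨hu, hv⟩ x _
    have hq := (qfun_mem_Icc x φ hu hv).1
    have hΨ : 0 < Psi α (β + 1) t (qfun x φ z.1 z.2) := Psi_pos ht hq
    rw [norm_eq_abs, abs_mul, abs_mul, abs_neg, abs_of_nonneg (by linarith : 0 ≤ α + β + 2),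
      abs_of_pos hΨ]
    calc (α + β + 2) * Psi α (β + 1) t (qfun x φ z.1 z.2) * |qfunDeriv x φ z.1 z.2|
        ≤ (α + β + 2) * Psi α (β + 1) t (qfun x φ z.1 z.2) * 1 := by
          have : 0 ≤ α + β + 2 := by linarith
          gcongr
          exact abs_qfunDeriv_le_one x φ hu hv
      _ ≤ (α + β + 2) * Psi α (β + 1) t 0 := by
          rw [mul_one]
          exact mul_le_mul_of_nonneg_left (Psi_le_Psi_zero (by linarith) ht hq) (by linarith)
  · filter_upwards [ae_prod_PiMeasure_mem_Icc α hβ] with z ⟨hu, hv⟩ x _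
    exact (hasDerivAt_Psi ht (qfun_mem_Icc x φ hu hv).1).comp (h₂ := Psi α β t) x
      (hasDerivAt_qfun x φ z.1 z.2)

theorem abs_sub_mul_Psi_add_one_mul_abs_qfunDeriv_le (ht : 0 < t) (hθ : θ ∈ Icc 0 π)
    (hφ : φ ∈ Icc 0 π) {u v : ℝ} (hu : u ∈ Icc (-1) 1) (hv : v ∈ Icc (-1) 1) :
    |θ - φ| * (Psi α (β + 1) t (qfun θ φ u v) * |qfunDeriv θ φ u v|) ≤
      4 * Psi α β t (qfun θ φ u v) := by
  have hq := (qfun_mem_Icc θ φ hu hv).1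
  have hcosh : 0 ≤ cosh (t / 2) - 1 := sub_nonneg.2 (one_le_cosh _)
  have hΨ : 0 < Psi α (β + 1) t (qfun θ φ u v) := Psi_pos ht hq
  calc |θ - φ| * (Psi α (β + 1) t (qfun θ φ u v) * |qfunDeriv θ φ u v|)
      = |θ - φ| * |qfunDeriv θ φ u v| * Psi α (β + 1) t (qfun θ φ u v) := by ring
    _ ≤ 4 * (cosh (t / 2) - 1 + qfun θ φ u v) * Psi α (β + 1) t (qfun θ φ u v) := by
        gcongr ?_ * Psi α (β + 1) t _
        linarith [abs_sub_mul_abs_qfunDeriv_le hθ hφ hu hv]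
    _ = 4 * Psi α β t (qfun θ φ u v) := by rw [mul_assoc, mul_Psi_add_one ht hq]

theorem exp_mul_Hker_le (hα : -(1 / 2) ≤ α) (hβ : -(1 / 2) ≤ β) :
    ∃ C : ℝ, ∀ t, 0 < t → ∀ θ ∈ Ioo 0 π, ∀ φ ∈ Ioo 0 π, θ ≠ φ →
      exp (t * (α + β + 1) / 2) * Hker α β t θ φ ≤
        C / (jacobiMeasure α β (jacobiBall θ |θ - φ|)).toReal := by
  obtain ⟨C, hC⟩ := exp_mul_abs_integral_le_div_jacobiMeasure hα hβ
  refine ⟨jacobiConst α β * C, fun t ht θ hθ φ hφ hne => ?_⟩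
  have hbound := hC t ht θ hθ φ hφ hne (fun z => Psi α β t (qfun θ φ z.1 z.2)) 1 zero_le_one <| by
    filter_upwards [ae_prod_PiMeasure_mem_Icc α hβ] with z ⟨hu, hv⟩
    rw [one_mul, abs_of_pos (Psi_pos ht (qfun_mem_Icc θ φ hu hv).1)]
  rw [Hker_eq_integral hα hβ ht, mul_left_comm, mul_div_assoc (jacobiConst α β)]
  rw [one_mul] at hbound
  refine mul_le_mul_of_nonneg_left (le_trans ?_ hbound) (jacobiConst_nonneg α β)
  gcongr
  exact le_abs_self _

theorem exp_mul_abs_deriv_Hker_le (hα : -(1 / 2) ≤ α) (hβ : -(1 / 2) ≤ β) :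
    ∃ C : ℝ, ∀ t, 0 < t → ∀ θ ∈ Ioo 0 π, ∀ φ ∈ Ioo 0 π, θ ≠ φ →
      exp (t * (α + β + 1) / 2) * |deriv (fun θ' => Hker α β t θ' φ) θ| ≤
        C / (|θ - φ| * (jacobiMeasure α β (jacobiBall θ |θ - φ|)).toReal) := by
  obtain ⟨C, hC⟩ := exp_mul_abs_integral_le_div_jacobiMeasure hα hβ
  refine ⟨jacobiConst α β * ((α + β + 2) * 4 * C), fun t ht θ hθ φ hφ hne => ?_⟩
  have hL : 0 ≤ α + β + 2 := by linarith
  have hdist : 0 < |θ - φ| := abs_pos.2 (sub_ne_zero.2 hne)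
  have hbound := hC t ht θ hθ φ hφ hne
    (fun z => -(α + β + 2) * Psi α (β + 1) t (qfun θ φ z.1 z.2) * qfunDeriv θ φ z.1 z.2)
    ((α + β + 2) * 4 / |θ - φ|) (by positivity) <| by
      filter_upwards [ae_prod_PiMeasure_mem_Icc α hβ] with z ⟨hu, hv⟩
      have hΨ : 0 < Psi α (β + 1) t (qfun θ φ z.1 z.2) := Psi_pos ht (qfun_mem_Icc θ φ hu hv).1
      rw [abs_mul, abs_mul, abs_neg, abs_of_nonneg hL, abs_of_pos hΨ, div_mul_eq_mul_div,
        le_div_iff₀' hdist, mul_assoc, mul_left_comm, mul_assoc]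
      exact mul_le_mul_of_nonneg_left (abs_sub_mul_Psi_add_one_mul_abs_qfunDeriv_le ht
        (Ioo_subset_Icc_self hθ) (Ioo_subset_Icc_self hφ) hu hv) hL
  rw [(hasDerivAt_Hker hα hβ ht θ φ).deriv, abs_mul, abs_of_nonneg (jacobiConst_nonneg α β),
    mul_left_comm, mul_div_assoc (jacobiConst α β)]
  rw [div_mul_eq_mul_div, div_div] at hbound
  exact mul_le_mul_of_nonneg_left hbound (jacobiConst_nonneg α β)

end Hker

/-- exponentially weighted growth and gradient estimates for the
Jacobi-Poisson kernel. -/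
theorem Hker_exponential_bounds (α β : ℝ) (hα : -(1 / 2) ≤ α) (hβ : -(1 / 2) ≤ β) :
    ∃ C : ℝ, 0 < C ∧
      ∀ t : ℝ, 0 < t →
        ∀ θ ∈ Ioo (0 : ℝ) π, ∀ ψ ∈ Ioo (0 : ℝ) π, θ ≠ ψ →
          Real.exp (t * (α + β + 1) / 2) * Hker α β t θ ψ
            ≤ C / (jacobiMeasure α β (jacobiBall θ |θ - ψ|)).toReal ∧
          Real.exp (t * (α + β + 1) / 2) * |deriv (fun θ' => Hker α β t θ' ψ) θ|
            ≤ C / (|θ - ψ| * (jacobiMeasure α β (jacobiBall θ |θ - ψ|)).toReal) := by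
  obtain ⟨C₁, growth⟩ := exp_mul_Hker_le hα hβ
  obtain ⟨C₂, gradient⟩ := exp_mul_abs_deriv_Hker_le hα hβ
  refine ⟨max 1 (max C₁ C₂), by positivity, fun t ht θ hθ ψ hψ hne =>
    ⟨(growth t ht θ hθ ψ hψ hne).trans ?_, (gradient t ht θ hθ ψ hψ hne).trans ?_⟩⟩
  all_goals
    gcongr
    simp
end
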